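/- arXiv:1007.5458 — 3 statements merged into one kernel-verified Lean document; each statement's English description precedes it below -/
import Mathlib

section
/- Let V_0, …, V_n be K-vector spaces with linear maps d : V_m → V_{m-1} satisfying d∘d = 0. Define L_m = V_0 × ⋯ × V_m, s(v_0,…,v_m) = (v_0,…,v_{m-1}), t(v_0,…,v_m) = (v_0,…,v_{m-1} + d v_m), 1_{(v_0,…,v_m)} = (v_0,…,v_m,0), and, for pairs with t^{m-p}(v) = s^{m-p}(w), (v_0,…,v_m) ∘_p (w_0,…,w_m) = (v_0,…,v_p, v_{p+1}+w_{p+1}, …, v_m+w_m). These data form a linear n-category: the globular identities s∘s = s∘t, t∘s = t∘t hold; s(a ∘_{m-1} b) = s(a) and t(a ∘_{m-1} b) = t(b); s(a ∘_p b) = s(a) ∘_p s(b) and t(a ∘_p b) = t(a) ∘_p t(b) for p ≤ m-2; each ∘_p is associative and satisfies the unit laws; the interchange law (a ∘_p b) ∘_q (c ∘_p d) = (a ∘_q c) ∘_p (b ∘_q d) holds for q < p on composable cells; and 1_{a ∘_p b} = 1_a ∘_p 1_b. -/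
/- The explicit model: L_m = V_0 × ⋯ × V_m with
   s(v_0,…,v_m) = (v_0,…,v_{m-1}),  t(v_0,…,v_m) = (v_0,…,v_{m-1} + d v_m),
   1_{(v_0,…,v_m)} = (v_0,…,v_m,0),
   (v ∘_p w) = (v_0,…,v_p, v_{p+1}+w_{p+1}, …, v_m+w_m). -/

namespace GlobModel

variable {K : Type} [Field K] {V : ℕ → Type} [∀ i, AddCommGroup (V i)]
  [∀ i, Module K (V i)]

/-- The space of `m`-cells `L_m = V_0 × ⋯ × V_m`. -/
abbrev Cells (V : ℕ → Type) (m : ℕ) : Type := ∀ i : Fin (m + 1), V i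

/-- Source map `s (v_0,…,v_m) = (v_0,…,v_{m-1})`. -/
def smap (m : ℕ) (v : Cells V (m + 1)) : Cells V m := fun i => v ⟨i.val, by omega⟩

/-- Target map `t (v_0,…,v_m) = (v_0,…,v_{m-1} + d v_m)`. -/
def tmap (d : ∀ i, V (i + 1) →ₗ[K] V i) (m : ℕ) (v : Cells V (m + 1)) : Cells V m :=
  fun i =>
    Fin.lastCases (motive := fun j : Fin (m + 1) => V j)
      (v ⟨m, by omega⟩ + d m (v ⟨m + 1, by omega⟩))
      (fun j => v ⟨j.val, by omega⟩) i

/-- Identity map `1_{(v_0,…,v_m)} = (v_0,…,v_m,0)`. -/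
def onemap (m : ℕ) (v : Cells V m) : Cells V (m + 1) := fun i =>
  Fin.lastCases (motive := fun j : Fin (m + 2) => V j) 0 (fun j => v ⟨j.val, by omega⟩) i

/-- Composition along a `p`-cell:
`(v ∘_p w)_i = v_i` for `i ≤ p` and `v_i + w_i` for `i > p`. -/
def compmap (p : ℕ) {m : ℕ} (v w : Cells V m) : Cells V m := fun i =>
  if (i : ℕ) ≤ p then v i else v i + w i

/-- One application of the source map (junk identity at level 0). -/
def sstep : ∀ m, Cells V m → Cells V (m - 1)
  | 0, v => v
  | (m + 1), v => smap m v

/-- One application of the target map (junk identity at level 0). -/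
def tstep (d : ∀ i, V (i + 1) →ₗ[K] V i) : ∀ m, Cells V m → Cells V (m - 1)
  | 0, v => v
  | (m + 1), v => tmap d m v

/-- Iterated source map `s^k : L_m → L_{m-k}`. -/
def sIter (m : ℕ) : ∀ k, Cells V m → Cells V (m - k)
  | 0, v => v
  | (k + 1), v => sstep (m - k) (sIter m k v)

/-- Iterated target map `t^k : L_m → L_{m-k}`. -/
def tIter (d : ∀ i, V (i + 1) →ₗ[K] V i) (m : ℕ) : ∀ k, Cells V m → Cells V (m - k)
  | 0, v => v
  | (k + 1), v => tstep d (m - k) (tIter d m k v)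

/-- Iterated identity map `1^k : L_j → L_{j+k}`. -/
def oneIter : ∀ (j k : ℕ), Cells V j → Cells V (j + k)
  | _, 0, v => v
  | j, (k + 1), v => onemap (j + k) (oneIter j k v)

/-- Cast between levels. -/
def castC {a b : ℕ} (h : a = b) (v : Cells V a) : Cells V b := h ▸ v

/-- Composability of two `m`-cells along a `p`-cell: `t^{m-p} v = s^{m-p} w`. -/
def Composable (d : ∀ i, V (i + 1) →ₗ[K] V i) (p : ℕ) {m : ℕ}
    (v w : Cells V m) : Prop :=
  tIter d m (m - p) v = sIter m (m - p) w

end GlobModel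

open GlobModel

/-!
Composition is translation by a projection: `v ∘_p w = v + π_p w`, where `π_p` kills the entries of
index at most `p`. Linearity, associativity and interchange therefore hold because the `π_p` are
linear, idempotent and commute with each other.

The target is the source plus a correction in the top entry, `t v = s v + (0, …, 0, d v_{m+1})`.
For `p < m` the correction lies in the image of `π_p`, so `t` commutes with `π_p`. For `p = m`
one gets `t (π_m w) = t w - s w`, so that `t (v ∘_m w) = t v + t w - s w`, which is `t w` as soon as
`t v = s w`.
-/

namespace GlobModel

section Cells

variable {V : ℕ → Type} {m : ℕ}

theorem eq_of_smap_eq {v w : Cells V (m + 1)} (hs : smap m v = smap m w)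
    (hlast : v (Fin.last (m + 1)) = w (Fin.last (m + 1))) : v = w :=
  funext (Fin.lastCases hlast (congrFun hs))

theorem sstep_apply (v : Cells V m) (i : Fin (m - 1 + 1)) :
    sstep m v i = v ⟨i, by omega⟩ := by
  cases m <;> rfl

theorem sIter_apply (k : ℕ) (v : Cells V m) (i : Fin (m - k + 1)) :
    sIter m k v i = v ⟨i, by omega⟩ := by
  induction k with
  | zero => rfl
  | succ k ih => exact (sstep_apply (sIter m k v) i).trans (ih ⟨i, by omega⟩)

end Cells

section AddCommGroup

variable {V : ℕ → Type} [∀ i, AddCommGroup (V i)] {m : ℕ}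

theorem smap_add (v w : Cells V (m + 1)) : smap m (v + w) = smap m v + smap m w :=
  rfl

theorem onemap_castSucc (v : Cells V m) (i : Fin (m + 1)) : onemap m v i.castSucc = v i :=
  Fin.lastCases_castSucc (motive := fun j : Fin (m + 2) => V j) ..

theorem onemap_last (v : Cells V m) : onemap m v (Fin.last (m + 1)) = 0 :=
  Fin.lastCases_last (motive := fun j : Fin (m + 2) => V j) ..

theorem smap_onemap (v : Cells V m) : smap m (onemap m v) = v :=
  funext (onemap_castSucc v)

theorem oneIter_apply (j k : ℕ) (u : Cells V j) (i : Fin (j + k + 1)) :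
    oneIter j k u i = if h : (i : ℕ) < j + 1 then u ⟨i, h⟩ else 0 := by
  induction k with
  | zero =>
    rw [dif_pos (show (i : ℕ) < j + 1 from i.isLt)]
    rfl
  | succ k ih =>
    induction i using Fin.lastCases with
    | last =>
      rw [dif_neg (by rw [Fin.val_last]; omega)]
      exact onemap_last _
    | cast i => exact (onemap_castSucc _ i).trans (ih i)

theorem castC_oneIter_apply {j k : ℕ} (e : j + k = m) (u : Cells V j) (i : Fin (m + 1)) :
    castC e (oneIter j k u) i = if h : (i : ℕ) < j + 1 then u ⟨i, h⟩ else 0 := by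
  subst e
  exact oneIter_apply j k u i

/-- The cell `(0, …, 0, x)`, as an additive function of its top entry `x`; target and source of a
cell differ by such a cell. -/
def topCell (V : ℕ → Type) [∀ i, AddCommGroup (V i)] (m : ℕ) : V m →+ Cells V m :=
  AddMonoidHom.single (fun i : Fin (m + 1) => V i) (Fin.last m)

theorem topCell_last (x : V m) : topCell V m x (Fin.last m) = x :=
  Pi.single_eq_same (M := fun i : Fin (m + 1) => V i) (Fin.last m) x

theorem topCell_castSucc (x : V m) (i : Fin m) : topCell V m x i.castSucc = 0 :=
  Pi.single_eq_of_ne (M := fun i : Fin (m + 1) => V i) i.castSucc_ne_last x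

theorem smap_topCell (x : V (m + 1)) : smap m (topCell V (m + 1) x) = 0 :=
  funext (topCell_castSucc x)

/-- The projection `π_p (v_0, …, v_m) = (0, …, 0, v_{p+1}, …, v_m)`, which is zero if `m ≤ p`.
Composition along a `p`-cell is `v ∘_p w = v + π_p w`. -/
def partAbove (p : ℕ) : Cells V m →+ Cells V m where
  toFun v i := if (i : ℕ) ≤ p then 0 else v i
  map_zero' := funext fun _ => ite_self 0
  map_add' v w := by
    funext i
    by_cases h : (i : ℕ) ≤ p <;> simp [h]

theorem partAbove_apply (p : ℕ) (v : Cells V m) (i : Fin (m + 1)) :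
    partAbove p v i = if (i : ℕ) ≤ p then 0 else v i :=
  rfl

theorem partAbove_last {p : ℕ} (hp : p < m) (v : Cells V m) :
    partAbove p v (Fin.last m) = v (Fin.last m) :=
  if_neg hp.not_ge

theorem partAbove_eq_zero {p : ℕ} (hp : m ≤ p) (v : Cells V m) : partAbove p v = 0 :=
  funext fun i => if_pos (i.is_le.trans hp)

theorem partAbove_partAbove_self (p : ℕ) (v : Cells V m) :
    partAbove p (partAbove p v) = partAbove p v := by
  funext i
  simp only [partAbove_apply]
  split_ifs <;> rfl

theorem partAbove_comm (p q : ℕ) (v : Cells V m) :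
    partAbove p (partAbove q v) = partAbove q (partAbove p v) := by
  funext i
  simp only [partAbove_apply]
  split_ifs <;> rfl

theorem partAbove_smul {R : Type*} [Semiring R] [∀ i, Module R (V i)] (p : ℕ) (k : R)
    (v : Cells V m) : partAbove p (k • v) = k • partAbove p v := by
  funext i
  simp only [partAbove_apply, Pi.smul_apply, smul_ite, smul_zero]

theorem partAbove_topCell {p : ℕ} (hp : p < m) (x : V m) :
    partAbove p (topCell V m x) = topCell V m x := by
  funext i
  induction i using Fin.lastCases with
  | last => exact partAbove_last hp _
  | cast i => rw [partAbove_apply, topCell_castSucc, ite_self]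

theorem smap_partAbove (p : ℕ) (v : Cells V (m + 1)) :
    smap m (partAbove p v) = partAbove p (smap m v) :=
  rfl

theorem partAbove_castC_oneIter {p j k : ℕ} (hj : j ≤ p) (e : j + k = m) (u : Cells V j) :
    partAbove p (castC e (oneIter j k u)) = 0 := by
  funext i
  rw [partAbove_apply, castC_oneIter_apply]
  split_ifs
  · rfl
  · omega
  · rfl

theorem castC_oneIter_sIter_add_partAbove {p k : ℕ} (hpk : p + k = m) (v : Cells V m) :
    castC (by omega) (oneIter (m - k) k (sIter m k v)) + partAbove p v = v := by
  funext i
  rw [Pi.add_apply, castC_oneIter_apply, partAbove_apply]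
  split_ifs
  · rw [sIter_apply, add_zero]
  · omega
  · omega
  · exact zero_add _

theorem compmap_eq_add_partAbove (p : ℕ) (v w : Cells V m) :
    compmap p v w = v + partAbove p w := by
  funext i
  rw [Pi.add_apply, partAbove_apply, compmap]
  split_ifs
  · exact (add_zero _).symm
  · rfl

theorem compmap_add (p : ℕ) (v v' w w' : Cells V m) :
    compmap p (v + v') (w + w') = compmap p v w + compmap p v' w' := by
  simp only [compmap_eq_add_partAbove, map_add, add_add_add_comm]

theorem compmap_smul {R : Type*} [Semiring R] [∀ i, Module R (V i)] (p : ℕ) (k : R)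
    (v w : Cells V m) : compmap p (k • v) (k • w) = k • compmap p v w := by
  simp only [compmap_eq_add_partAbove, partAbove_smul, smul_add]

theorem compmap_assoc (p : ℕ) (u v w : Cells V m) :
    compmap p (compmap p u v) w = compmap p u (compmap p v w) := by
  simp only [compmap_eq_add_partAbove, map_add, partAbove_partAbove_self, add_assoc]

theorem compmap_interchange (q p : ℕ) (a b c e : Cells V m) :
    compmap q (compmap p a b) (compmap p c e) =
      compmap p (compmap q a c) (compmap q b e) := by
  simp only [compmap_eq_add_partAbove, map_add, partAbove_comm q p, add_add_add_comm]

theorem compmap_castC_oneIter_sIter {p k : ℕ} (hpk : p + k = m) (v : Cells V m) :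
    compmap p (castC (by omega) (oneIter (m - k) k (sIter m k v))) v = v := by
  rw [compmap_eq_add_partAbove, castC_oneIter_sIter_add_partAbove hpk]

theorem compmap_castC_oneIter {p j k : ℕ} (hj : j ≤ p) (e : j + k = m) (v : Cells V m)
    (u : Cells V j) : compmap p v (castC e (oneIter j k u)) = v := by
  rw [compmap_eq_add_partAbove, partAbove_castC_oneIter hj, add_zero]

theorem smap_compmap (p : ℕ) (v w : Cells V (m + 1)) :
    smap m (compmap p v w) = compmap p (smap m v) (smap m w) :=
  rfl

theorem smap_compmap_self (v w : Cells V (m + 1)) : smap m (compmap m v w) = smap m v := by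
  rw [smap_compmap, compmap_eq_add_partAbove, partAbove_eq_zero le_rfl, add_zero]

theorem onemap_compmap (p : ℕ) (v w : Cells V m) :
    onemap m (compmap p v w) = compmap p (onemap m v) (onemap m w) := by
  apply eq_of_smap_eq
  · simp only [smap_compmap, smap_onemap]
  · simp only [compmap, onemap_last, add_zero, ite_self]

end AddCommGroup

section Target

variable {K : Type} [Field K] {V : ℕ → Type} [∀ i, AddCommGroup (V i)] [∀ i, Module K (V i)]
  (d : ∀ i, V (i + 1) →ₗ[K] V i) {m : ℕ}

theorem tmap_eq_smap_add_topCell (v : Cells V (m + 1)) :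
    tmap d m v = smap m v + topCell V m (d m (v (Fin.last (m + 1)))) := by
  funext i
  rw [Pi.add_apply, tmap]
  induction i using Fin.lastCases with
  | last =>
    rw [Fin.lastCases_last, topCell_last]
    rfl
  | cast i =>
    rw [Fin.lastCases_castSucc, topCell_castSucc, add_zero]
    rfl

theorem tmap_add (v w : Cells V (m + 1)) : tmap d m (v + w) = tmap d m v + tmap d m w := by
  simp only [tmap_eq_smap_add_topCell, smap_add, Pi.add_apply, map_add, add_add_add_comm]

theorem tmap_topCell (x : V (m + 1)) :
    tmap d m (topCell V (m + 1) x) = topCell V m (d m x) := by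
  rw [tmap_eq_smap_add_topCell, smap_topCell, topCell_last, zero_add]

theorem tmap_onemap (v : Cells V m) : tmap d m (onemap m v) = v := by
  rw [tmap_eq_smap_add_topCell, smap_onemap, onemap_last, map_zero, map_zero, add_zero]

theorem smap_smap_eq_smap_tmap (v : Cells V (m + 2)) :
    smap m (smap (m + 1) v) = smap m (tmap d (m + 1) v) := by
  rw [tmap_eq_smap_add_topCell, smap_add, smap_topCell, add_zero]

theorem tmap_smap_eq_tmap_tmap (hd : ∀ x, d m (d (m + 1) x) = 0) (v : Cells V (m + 2)) :
    tmap d m (smap (m + 1) v) = tmap d m (tmap d (m + 1) v) := by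
  rw [tmap_eq_smap_add_topCell d v, tmap_add, tmap_topCell, hd, map_zero, add_zero]

theorem tmap_partAbove {p : ℕ} (hp : p < m) (v : Cells V (m + 1)) :
    tmap d m (partAbove p v) = partAbove p (tmap d m v) := by
  rw [tmap_eq_smap_add_topCell, tmap_eq_smap_add_topCell, map_add, smap_partAbove,
    partAbove_last (by omega), partAbove_topCell hp]

theorem smap_add_tmap_partAbove_self (w : Cells V (m + 1)) :
    smap m w + tmap d m (partAbove m w) = tmap d m w := by
  rw [tmap_eq_smap_add_topCell, tmap_eq_smap_add_topCell, smap_partAbove,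
    partAbove_eq_zero le_rfl, partAbove_last m.lt_succ_self, zero_add]

theorem tmap_compmap {p : ℕ} (hp : p < m) (v w : Cells V (m + 1)) :
    tmap d m (compmap p v w) = compmap p (tmap d m v) (tmap d m w) := by
  simp only [compmap_eq_add_partAbove, tmap_add, tmap_partAbove d hp]

variable {d}

theorem Composable.tmap_eq_smap {v w : Cells V (m + 1)} (h : Composable d m v w) :
    tmap d m v = smap m w := by
  rw [Composable, Nat.add_sub_cancel_left] at h
  exact h

theorem Composable.tmap_compmap_self {v w : Cells V (m + 1)} (h : Composable d m v w) :
    tmap d m (compmap m v w) = tmap d m w := by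
  rw [compmap_eq_add_partAbove, tmap_add, h.tmap_eq_smap, smap_add_tmap_partAbove_self]

end Target

end GlobModel

/-- Given vector spaces `V_0, …, V_n` and linear maps `d : V_m → V_{m-1}`
with `d ∘ d = 0`, the data `L_m = V_0 × ⋯ × V_m` with the explicit source, target,
identity and composition maps form a linear n-category: the globular identities hold,
sources/targets of composites are as required, the compositions are linear on composable
pairs, associative and unital, the interchange law holds, and identities are compatible
with compositions. -/
theorem explicit_model_is_linear_n_category (K : Type) [Field K] (n : ℕ)
    (V : ℕ → Type) [∀ i, AddCommGroup (V i)] [∀ i, Module K (V i)]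
    (d : ∀ i, V (i + 1) →ₗ[K] V i)
    (hd : ∀ i (x : V (i + 2)), d i (d (i + 1) x) = 0) :
    -- globular identities
    (∀ m (v : Cells V (m + 2)), smap m (smap (m + 1) v) = smap m (tmap d (m + 1) v)) ∧
    (∀ m (v : Cells V (m + 2)),
        tmap d m (smap (m + 1) v) = tmap d m (tmap d (m + 1) v)) ∧
    -- identities have the right source and target
    (∀ m (v : Cells V m), smap m (onemap m v) = v) ∧
    (∀ m (v : Cells V m), tmap d m (onemap m v) = v) ∧
    -- the compositions are linear on composable pairs
    (∀ p m (v v' w w' : Cells V m), Composable d p v w → Composable d p v' w' →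
        compmap p (v + v') (w + w') = compmap p v w + compmap p v' w') ∧
    (∀ p m (k : K) (v w : Cells V m), Composable d p v w →
        compmap p (k • v) (k • w) = k • compmap p v w) ∧
    -- source and target of a composite, case p = m-1
    (∀ m (v w : Cells V (m + 1)), Composable d m v w →
        smap m (compmap m v w) = smap m v) ∧
    (∀ m (v w : Cells V (m + 1)), Composable d m v w →
        tmap d m (compmap m v w) = tmap d m w) ∧
    -- source and target of a composite, case p ≤ m-2
    (∀ p m, p < m → ∀ (v w : Cells V (m + 1)), Composable d p v w →
        smap m (compmap p v w) = compmap p (smap m v) (smap m w)) ∧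
    (∀ p m, p < m → ∀ (v w : Cells V (m + 1)), Composable d p v w →
        tmap d m (compmap p v w) = compmap p (tmap d m v) (tmap d m w)) ∧
    -- associativity
    (∀ p m (u v w : Cells V m), Composable d p u v → Composable d p v w →
        compmap p (compmap p u v) w = compmap p u (compmap p v w)) ∧
    -- unit laws
    (∀ p m, p < m → ∀ v : Cells V m,
        compmap p (castC (by omega : m - (m - p) + (m - p) = m)
          (oneIter (m - (m - p)) (m - p) (sIter m (m - p) v))) v = v) ∧
    (∀ p m, p < m → ∀ v : Cells V m,
        compmap p v (castC (by omega : m - (m - p) + (m - p) = m)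
          (oneIter (m - (m - p)) (m - p) (tIter d m (m - p) v))) = v) ∧
    -- interchange law
    (∀ q p m, q < p → p < m → ∀ (a b c e : Cells V m),
        Composable d p a b → Composable d p c e →
        Composable d q a c → Composable d q b e →
        compmap q (compmap p a b) (compmap p c e) =
          compmap p (compmap q a c) (compmap q b e)) ∧
    -- identities are compatible with compositions
    (∀ p m (v w : Cells V m), Composable d p v w →
        onemap m (compmap p v w) = compmap p (onemap m v) (onemap m w)) := by
  exact ⟨fun _ => smap_smap_eq_smap_tmap d,
    fun m => tmap_smap_eq_tmap_tmap d (hd m),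
    fun _ => smap_onemap,
    fun _ => tmap_onemap d,
    fun p _ v v' w w' _ _ => compmap_add p v v' w w',
    fun p _ k v w _ => compmap_smul p k v w,
    fun _ v w _ => smap_compmap_self v w,
    fun _ _ _ h => h.tmap_compmap_self,
    fun p _ _ v w _ => smap_compmap p v w,
    fun _ _ hp v w _ => tmap_compmap d hp v w,
    fun p _ u v w _ _ => compmap_assoc p u v w,
    fun _ _ hp => compmap_castC_oneIter_sIter (Nat.add_sub_of_le hp.le),
    fun _ _ hp v => compmap_castC_oneIter (Nat.sub_sub_self hp.le).le _ v _,
    fun q p _ _ _ a b c e _ _ _ _ => compmap_interchange q p a b c e,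
    fun p _ v w _ => onemap_compmap p v w⟩
end

section
/- Let d : V_1 → V_0 and d' : V'_1 → V'_0 be linear maps between K-vector spaces and let L, L' be the associated linear categories. On L_1 ⊗ L'_1 define S = s ⊗ s', T = t ⊗ t', identities 1_X = (1 ⊗ 1')(X) for X ∈ L_0 ⊗ L'_0, and composition X ∘ Y = X + Y − 1_{T(X)} whenever T(X) = S(Y) (the unique composition making these data a linear category L ⊠ L'). Then for all composable pairs (v,w) in L (t(v) = s(w)) and (v',w') in L' (t'(v') = s'(w')): (v ∘ w) ⊗ (v' ∘ w') = (v ⊗ v') ∘ (w ⊗ w') + (v − 1_{t(v)}) ⊗ (w' − 1_{s'(w')}) + (w − 1_{s(w)}) ⊗ (v' − 1_{t'(v')}). -/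
/- The linear category L associated with a linear map d : V₁ → V₀ has
   L₀ = V₀, L₁ = V₀ × V₁, s(v₀,v₁) = v₀, t(v₀,v₁) = v₀ + d v₁, 1ₓ = (x,0),
   and composition (v₀,v₁) ∘ (v₀ + d v₁, w₁) = (v₀, v₁ + w₁).
   On L ⊠ L' (cells L₀ ⊗ L'₀ and L₁ ⊗ L'₁, source s ⊗ s', target t ⊗ t',
   identities 1 ⊗ 1') the composition is X ∘ Y = X + Y − (1 ⊗ 1')((t ⊗ t')(X)). -/

namespace TwoTerm

open scoped TensorProduct

variable {K : Type} [Field K] {V0 V1 : Type} [AddCommGroup V0] [AddCommGroup V1]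
  [Module K V0] [Module K V1]

/-- Source map `s : L₁ → L₀`. -/
def sMap (K : Type) [Field K] (V0 V1 : Type) [AddCommGroup V0] [AddCommGroup V1]
    [Module K V0] [Module K V1] : (V0 × V1) →ₗ[K] V0 :=
  LinearMap.fst K V0 V1

/-- Target map `t : L₁ → L₀`, `t(v₀,v₁) = v₀ + d v₁`. -/
def tMap (d : V1 →ₗ[K] V0) : (V0 × V1) →ₗ[K] V0 :=
  LinearMap.fst K V0 V1 + d.comp (LinearMap.snd K V0 V1)

/-- Identity map `1 : L₀ → L₁`, `1ₓ = (x,0)`. -/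
def oneMap (K : Type) [Field K] (V0 V1 : Type) [AddCommGroup V0] [AddCommGroup V1]
    [Module K V0] [Module K V1] : V0 →ₗ[K] (V0 × V1) :=
  LinearMap.prod LinearMap.id 0

/-- Composition of composable 1-cells of `L`: `(v₀,v₁) ∘ (v₀ + d v₁, w₁) = (v₀, v₁ + w₁)`. -/
def lcomp (v w : V0 × V1) : V0 × V1 := (v.1, v.2 + w.2)

variable {V'0 V'1 : Type} [AddCommGroup V'0] [AddCommGroup V'1]
  [Module K V'0] [Module K V'1]

/-- Composition on the 1-cells `L₁ ⊗ L'₁` of `L ⊠ L'`: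
`X ∘ Y = X + Y − (1 ⊗ 1')((t ⊗ t')(X))`. -/
noncomputable def bcomp (d : V1 →ₗ[K] V0) (d' : V'1 →ₗ[K] V'0)
    (X Y : (V0 × V1) ⊗[K] (V'0 × V'1)) : (V0 × V1) ⊗[K] (V'0 × V'1) :=
  X + Y -
    TensorProduct.map (oneMap K V0 V1) (oneMap K V'0 V'1)
      (TensorProduct.map (tMap d) (tMap d') X)

end TwoTerm

open TwoTerm
open scoped TensorProduct

/-! In `L`, composition is `v ∘ w = v + w - 1`, where `1` is the identity at the common object
`t v = s w`. Writing each 1-cell as this identity plus a remainder, `v ∘ w` is the identity plus the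
sum of the two remainders. Hence the tensor product of two composites contains the remainder of `v`
tensored with that of `w'`, and the remainder of `w` tensored with that of `v'`; these two mixed
terms are exactly what the composition of `L ⊠ L'` omits. -/

theorem add_sub_tmul_add_sub {R M N : Type*} [CommSemiring R] [AddCommGroup M] [AddCommGroup N]
    [Module R M] [Module R N] (a b e : M) (a' b' e' : N) :
    (a + b - e) ⊗ₜ[R] (a' + b' - e') =
      a ⊗ₜ a' + b ⊗ₜ b' - e ⊗ₜ e' + (a - e) ⊗ₜ (b' - e') + (b - e) ⊗ₜ (a' - e') := by
  simp only [TensorProduct.add_tmul, TensorProduct.tmul_add, TensorProduct.sub_tmul,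
    TensorProduct.tmul_sub]
  abel

namespace TwoTerm

variable {K : Type} [Field K] {V0 V1 : Type} [AddCommGroup V0] [AddCommGroup V1]
  [Module K V0] [Module K V1]

variable (K) in
theorem lcomp_eq_add_sub_oneMap_sMap (v w : V0 × V1) :
    lcomp v w = v + w - oneMap K V0 V1 (sMap K V0 V1 w) := by
  ext <;> simp [lcomp, sMap, oneMap]

theorem lcomp_eq_add_sub_oneMap_tMap (d : V1 →ₗ[K] V0) {v w : V0 × V1}
    (h : tMap d v = sMap K V0 V1 w) :
    lcomp v w = v + w - oneMap K V0 V1 (tMap d v) := by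
  rw [h, lcomp_eq_add_sub_oneMap_sMap K]

variable {V'0 V'1 : Type} [AddCommGroup V'0] [AddCommGroup V'1]
  [Module K V'0] [Module K V'1]

theorem bcomp_tmul_tmul (d : V1 →ₗ[K] V0) (d' : V'1 →ₗ[K] V'0)
    (v w : V0 × V1) (v' w' : V'0 × V'1) :
    bcomp d d' (v ⊗ₜ[K] v') (w ⊗ₜ[K] w') =
      v ⊗ₜ[K] v' + w ⊗ₜ[K] w' -
        oneMap K V0 V1 (tMap d v) ⊗ₜ[K] oneMap K V'0 V'1 (tMap d' v') := by
  rw [bcomp, TensorProduct.map_tmul, TensorProduct.map_tmul]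

end TwoTerm

/-- For composable pairs `(v,w)` in `L` and `(v',w')` in `L'`:
`(v ∘ w) ⊗ (v' ∘ w') = (v ⊗ v') ∘ (w ⊗ w') + (v − 1_{t v}) ⊗ (w' − 1_{s' w'})
  + (w − 1_{s w}) ⊗ (v' − 1_{t' v'})`. -/
theorem tensor_of_composites (K : Type) [Field K]
    (V0 V1 V'0 V'1 : Type) [AddCommGroup V0] [AddCommGroup V1]
    [AddCommGroup V'0] [AddCommGroup V'1]
    [Module K V0] [Module K V1] [Module K V'0] [Module K V'1]
    (d : V1 →ₗ[K] V0) (d' : V'1 →ₗ[K] V'0)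
    (v w : V0 × V1) (v' w' : V'0 × V'1)
    (h : tMap d v = sMap K V0 V1 w) (h' : tMap d' v' = sMap K V'0 V'1 w') :
    lcomp v w ⊗ₜ[K] lcomp v' w' =
      bcomp d d' (v ⊗ₜ[K] v') (w ⊗ₜ[K] w') +
        (v - oneMap K V0 V1 (tMap d v)) ⊗ₜ[K] (w' - oneMap K V'0 V'1 (sMap K V'0 V'1 w')) +
        (w - oneMap K V0 V1 (sMap K V0 V1 w)) ⊗ₜ[K] (v' - oneMap K V'0 V'1 (tMap d' v')) := by
  rw [lcomp_eq_add_sub_oneMap_tMap d h, lcomp_eq_add_sub_oneMap_tMap d' h', bcomp_tmul_tmul,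
    ← h, ← h', add_sub_tmul_add_sub]
end

section
/- There is a one-to-one correspondence between Lie 3-algebras (G(V), [−,−], J, μ) and 3-term Lie infinity algebras (V, ℓ_1, ℓ_2, ℓ_3, ℓ_4) whose bilinear map ℓ_2 vanishes on V_1 × V_1 and whose trilinear map ℓ_3 vanishes on triples of total degree 1. Under this correspondence ℓ_1 = d, the bracket is [(x,f,a),(y,g,b)] = (ℓ_2(x,y), ℓ_2(x,g) + ℓ_2(f, y + d g), ℓ_2(x,b) + ℓ_2(a,y)), the Jacobiator is J_{xyz} = ([[x,y],z], ℓ_3(x,y,z)), and the Identiator is μ_{xyzu} = ([[[x,y],z],u], h_{xyzu}, −ℓ_4(x,y,z,u)), where h_{xyzu} is the V_1-component of η_{xyzu}. -/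
/- The linear 2-category G(V) associated with a 3-term chain complex
   V₂ --d₂--> V₁ --d₁--> V₀ (d₁ ∘ d₂ = 0):
   L₀ = V₀, L₁ = V₀ × V₁, L₂ = V₀ × V₁ × V₂,
   s(v₀,…,v_m) = (v₀,…,v_{m-1}), t(v₀,…,v_m) = (v₀,…,v_{m-1} + d v_m),
   1_{(v₀,…,v_m)} = (v₀,…,v_m,0),
   (v₀,…,v_m) ∘_p (w₀,…,w_m) = (v₀,…,v_p, v_{p+1}+w_{p+1}, …, v_m+w_m). -/

namespace GV

variable {K : Type} [Field K] {V0 V1 V2 : Type}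
  [AddCommGroup V0] [AddCommGroup V1] [AddCommGroup V2]
  [Module K V0] [Module K V1] [Module K V2]

variable (d1 : V1 →ₗ[K] V0) (d2 : V2 →ₗ[K] V1)

/-- Source of a 1-cell. -/
def s1 (v : V0 × V1) : V0 := v.1

/-- Target of a 1-cell. -/
def t1 (v : V0 × V1) : V0 := v.1 + d1 v.2

/-- Source of a 2-cell. -/
def s2 (v : V0 × V1 × V2) : V0 × V1 := (v.1, v.2.1)

/-- Target of a 2-cell. -/
def t2 (v : V0 × V1 × V2) : V0 × V1 := (v.1, v.2.1 + d2 v.2.2)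

/-- Identity 1-cell on a 0-cell. -/
def one0 (x : V0) : V0 × V1 := (x, 0)

/-- Identity 2-cell on a 1-cell. -/
def one1 (v : V0 × V1) : V0 × V1 × V2 := (v.1, v.2, 0)

/-- Composition of 1-cells along a 0-cell. -/
def comp01 (v w : V0 × V1) : V0 × V1 := (v.1, v.2 + w.2)

/-- Composition of 2-cells along a 0-cell. -/
def comp02 (v w : V0 × V1 × V2) : V0 × V1 × V2 := (v.1, v.2.1 + w.2.1, v.2.2 + w.2.2)

/-- Composition of 2-cells along a 1-cell. -/
def comp12 (v w : V0 × V1 × V2) : V0 × V1 × V2 := (v.1, v.2.1, v.2.2 + w.2.2)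

/-- Composability of 1-cells along a 0-cell: `t v = s w`. -/
def Comp01 (v w : V0 × V1) : Prop := t1 d1 v = s1 w

/-- Composability of 2-cells along a 0-cell: `t² v = s² w`. -/
def Comp02 (v w : V0 × V1 × V2) : Prop := t1 d1 (t2 d2 v) = s1 (s2 w)

/-- Composability of 2-cells along a 1-cell: `t v = s w`. -/
def Comp12 (v w : V0 × V1 × V2) : Prop := t2 d2 v = s2 w


/-- A graded antisymmetric chain map `ℓ₂` of weight 0 on `V = (V₀,V₁,V₂)` which
vanishes on `V₁ × V₁`. -/
structure Ell2 (K : Type) [Field K] (V0 V1 V2 : Type)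
    [AddCommGroup V0] [AddCommGroup V1] [AddCommGroup V2]
    [Module K V0] [Module K V1] [Module K V2]
    (d1 : V1 →ₗ[K] V0) (d2 : V2 →ₗ[K] V1) : Type where
  l00 : V0 → V0 → V0
  l01 : V0 → V1 → V1
  l10 : V1 → V0 → V1
  l02 : V0 → V2 → V2
  l20 : V2 → V0 → V2
  l11 : V1 → V1 → V2
  bil00 : (∀ x, IsLinearMap K (l00 x)) ∧ (∀ y, IsLinearMap K (fun x => l00 x y))
  bil01 : (∀ x, IsLinearMap K (l01 x)) ∧ (∀ g, IsLinearMap K (fun x => l01 x g))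
  bil10 : (∀ f, IsLinearMap K (l10 f)) ∧ (∀ y, IsLinearMap K (fun f => l10 f y))
  bil02 : (∀ x, IsLinearMap K (l02 x)) ∧ (∀ b, IsLinearMap K (fun x => l02 x b))
  bil20 : (∀ a, IsLinearMap K (l20 a)) ∧ (∀ y, IsLinearMap K (fun a => l20 a y))
  bil11 : (∀ f, IsLinearMap K (l11 f)) ∧ (∀ g, IsLinearMap K (fun f => l11 f g))
  anti00 : ∀ x y, l00 x y = -l00 y x
  anti10 : ∀ f y, l10 f y = -l01 y f
  anti20 : ∀ a y, l20 a y = -l02 y a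
  anti11 : ∀ f g, l11 f g = l11 g f
  chain01 : ∀ x g, d1 (l01 x g) = l00 x (d1 g)
  chain10 : ∀ f y, d1 (l10 f y) = l00 (d1 f) y
  chain02 : ∀ x b, d2 (l02 x b) = l01 x (d2 b)
  chain20 : ∀ a y, d2 (l20 a y) = l10 (d2 a) y
  chain11 : ∀ f g, d2 (l11 f g) = l01 (d1 f) g - l10 f (d1 g)
  chain12 : ∀ f b, (0 : V2) = l02 (d1 f) b - l11 f (d2 b)
  vanish11 : ∀ f g, l11 f g = 0


variable {d1} {d2} in
/-- The bracket of 1-cells associated with `ℓ₂`: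
`[(x,f),(y,g)] = (ℓ₂(x,y), ℓ₂(x,g) + ℓ₂(f, y + d g))`. -/
def br1 (E : Ell2 K V0 V1 V2 d1 d2) (v w : V0 × V1) : V0 × V1 :=
  (E.l00 v.1 w.1, E.l01 v.1 w.2 + E.l10 v.2 (w.1 + d1 w.2))

variable {d1} {d2} in
/-- The bracket of 2-cells associated with `ℓ₂`:
`[(x,f,a),(y,g,b)] = (ℓ₂(x,y), ℓ₂(x,g) + ℓ₂(f, y + d g), ℓ₂(x,b) + ℓ₂(a,y))`. -/
def br2 (E : Ell2 K V0 V1 V2 d1 d2) (v w : V0 × V1 × V2) : V0 × V1 × V2 :=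
  (E.l00 v.1 w.1, E.l01 v.1 w.2.1 + E.l10 v.2.1 (w.1 + d1 w.2.1),
    E.l02 v.1 w.2.2 + E.l20 v.2.2 w.1)

end GV

namespace GV

/-- An antisymmetric bilinear 2-functor `[−,−] : G(V) × G(V) → G(V)`. -/
structure Bracket (K : Type) [Field K] (V0 V1 V2 : Type)
    [AddCommGroup V0] [AddCommGroup V1] [AddCommGroup V2]
    [Module K V0] [Module K V1] [Module K V2]
    (d1 : V1 →ₗ[K] V0) (d2 : V2 →ₗ[K] V1) : Type where
  B0 : V0 → V0 → V0
  B1 : V0 × V1 → V0 × V1 → V0 × V1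
  B2 : V0 × V1 × V2 → V0 × V1 × V2 → V0 × V1 × V2
  bil0 : (∀ x, IsLinearMap K (B0 x)) ∧ (∀ y, IsLinearMap K (fun x => B0 x y))
  bil1 : (∀ v, IsLinearMap K (B1 v)) ∧ (∀ w, IsLinearMap K (fun v => B1 v w))
  bil2 : (∀ v, IsLinearMap K (B2 v)) ∧ (∀ w, IsLinearMap K (fun v => B2 v w))
  anti0 : ∀ x y, B0 x y = -B0 y x
  anti1 : ∀ v w, B1 v w = -B1 w v
  anti2 : ∀ v w, B2 v w = -B2 w v
  maps_s1 : ∀ v w, s1 (B1 v w) = B0 (s1 v) (s1 w)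
  maps_t1 : ∀ v w, t1 d1 (B1 v w) = B0 (t1 d1 v) (t1 d1 w)
  maps_s2 : ∀ v w, s2 (B2 v w) = B1 (s2 v) (s2 w)
  maps_t2 : ∀ v w, t2 d2 (B2 v w) = B1 (t2 d2 v) (t2 d2 w)
  maps_one0 : ∀ x y, B1 (one0 x) (one0 y) = one0 (B0 x y)
  maps_one1 : ∀ v w, B2 (one1 v) (one1 w) = one1 (B1 v w)
  maps_comp01 : ∀ v v' w w', Comp01 d1 v v' → Comp01 d1 w w' →
      B1 (comp01 v v') (comp01 w w') = comp01 (B1 v w) (B1 v' w')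
  maps_comp02 : ∀ v v' w w', Comp02 d1 d2 v v' → Comp02 d1 d2 w w' →
      B2 (comp02 v v') (comp02 w w') = comp02 (B2 v w) (B2 v' w')
  maps_comp12 : ∀ v v' w w', Comp12 d2 v v' → Comp12 d2 w w' →
      B2 (comp12 v v') (comp12 w w') = comp12 (B2 v w) (B2 v' w')


end GV

namespace GV

variable {K : Type} [Field K] {V0 V1 V2 : Type}
  [AddCommGroup V0] [AddCommGroup V1] [AddCommGroup V2]
  [Module K V0] [Module K V1] [Module K V2]
  {d1 : V1 →ₗ[K] V0} {d2 : V2 →ₗ[K] V1}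

/-- An antisymmetric trilinear map `ℓ₃ : V₀³ → V₁` satisfying the L∞ condition `n = 3`
(for its weight-1 graded antisymmetric extension by zero in total degree ≥ 1). -/
structure Ell3 (E : Ell2 K V0 V1 V2 d1 d2) : Type where
  l3 : V0 → V0 → V0 → V1
  tri : (∀ x y, IsLinearMap K (l3 x y)) ∧
    (∀ x z, IsLinearMap K (fun y => l3 x y z)) ∧
    (∀ y z, IsLinearMap K (fun x => l3 x y z))
  anti12 : ∀ x y z, l3 x y z = -l3 y x z
  anti23 : ∀ x y z, l3 x y z = -l3 x z y
  cond1 : ∀ x y z, d1 (l3 x y z) + E.l00 (E.l00 x y) z - E.l00 (E.l00 x z) y +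
      E.l00 (E.l00 y z) x = 0
  cond2 : ∀ x y f, E.l01 (E.l00 x y) f - E.l10 (E.l01 x f) y + E.l10 (E.l01 y f) x +
      l3 (d1 f) x y = 0
  cond3 : ∀ x y a, E.l02 (E.l00 x y) a - E.l20 (E.l02 x a) y + E.l20 (E.l02 y a) x = 0

/-- A Jacobiator: a skew-symmetric trilinear natural 2-transformation
`[[−,−],•] ⇒ [[−,•],−] + [−,[−,•]]`. -/
structure Jacobiator (E : Ell2 K V0 V1 V2 d1 d2) : Type where
  J : V0 → V0 → V0 → V0 × V1
  tri : (∀ x y, IsLinearMap K (J x y)) ∧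
    (∀ x z, IsLinearMap K (fun y => J x y z)) ∧
    (∀ y z, IsLinearMap K (fun x => J x y z))
  src : ∀ x y z, (J x y z).1 = E.l00 (E.l00 x y) z
  tgt : ∀ x y z, t1 d1 (J x y z) = E.l00 (E.l00 x z) y + E.l00 x (E.l00 y z)
  anti12 : ∀ x y z, (J x y z).2 = -(J y x z).2
  anti23 : ∀ x y z, (J x y z).2 = -(J x z y).2
  nat3 : ∀ (x y z : V0) (f : V1) (a : V2),
      comp02 (br2 E (br2 E (x, 0, 0) (y, 0, 0)) (z, f, a))
          (one1 (J x y (t1 d1 (t2 d2 (z, f, a))))) =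
        comp02 (one1 (J x y z))
          (br2 E (br2 E (x, 0, 0) (z, f, a)) (y, 0, 0) +
            br2 E (x, 0, 0) (br2 E (y, 0, 0) (z, f, a)))
  nat1 : ∀ (x y z : V0) (f : V1) (a : V2),
      comp02 (br2 E (br2 E (x, f, a) (y, 0, 0)) (z, 0, 0))
          (one1 (J (t1 d1 (t2 d2 (x, f, a))) y z)) =
        comp02 (one1 (J x y z))
          (br2 E (br2 E (x, f, a) (z, 0, 0)) (y, 0, 0) +
            br2 E (x, f, a) (br2 E (y, 0, 0) (z, 0, 0)))
  nat2 : ∀ (x y z : V0) (f : V1) (a : V2),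
      comp02 (br2 E (br2 E (x, 0, 0) (y, f, a)) (z, 0, 0))
          (one1 (J x (t1 d1 (t2 d2 (y, f, a))) z)) =
        comp02 (one1 (J x y z))
          (br2 E (br2 E (x, 0, 0) (z, 0, 0)) (y, f, a) +
            br2 E (x, 0, 0) (br2 E (y, f, a) (z, 0, 0)))

end GV

namespace GV

variable {K : Type} [Field K] {V0 V1 V2 : Type}
  [AddCommGroup V0] [AddCommGroup V1] [AddCommGroup V2]
  [Module K V0] [Module K V1] [Module K V2]
  {d1 : V1 →ₗ[K] V0} {d2 : V2 →ₗ[K] V1}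

/-- The Jacobiator 1-cell associated with `ℓ₃`: `J_{xyz} = ([[x,y],z], ℓ₃(x,y,z))`. -/
def Jc (E : Ell2 K V0 V1 V2 d1 d2) (T : Ell3 E) (x y z : V0) : V0 × V1 :=
  (E.l00 (E.l00 x y) z, T.l3 x y z)

/-- The 1-cell
`η_{xyzu} = [J_{xyz},1_u] ∘₀ (J_{[x,z],y,u} + J_{x,[y,z],u}) ∘₀ ([J_{xzu},1_y] + 1)
  ∘₀ ([1_x,J_{yzu}] + 1)`, the unlabelled identity 1-cells being determined by
composability. -/
def eta (E : Ell2 K V0 V1 V2 d1 d2) (T : Ell3 E) (x y z u : V0) : V0 × V1 :=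
  let g1 := br1 E (Jc E T x y z) (one0 u)
  let g2 := Jc E T (E.l00 x z) y u + Jc E T x (E.l00 y z) u
  let N3 := br1 E (Jc E T x z u) (one0 y)
  let g3 := N3 + one0 (t1 d1 g2 - N3.1)
  let N4 := br1 E (one0 x) (Jc E T y z u)
  let g4 := N4 + one0 (t1 d1 g3 - N4.1)
  comp01 (comp01 (comp01 g1 g2) g3) g4

/-- The 1-cell
`ε_{xyzu} = J_{[x,y],z,u} ∘₀ ([J_{xyu},1_z] + 1)
  ∘₀ (J_{x,[y,u],z} + J_{[x,u],y,z} + J_{x,y,[z,u]})`. -/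
def eps (E : Ell2 K V0 V1 V2 d1 d2) (T : Ell3 E) (x y z u : V0) : V0 × V1 :=
  let g1 := Jc E T (E.l00 x y) z u
  let N2 := br1 E (Jc E T x y u) (one0 z)
  let g2 := N2 + one0 (t1 d1 g1 - N2.1)
  let g3 := Jc E T x (E.l00 y u) z + Jc E T (E.l00 x u) y z + Jc E T x y (E.l00 z u)
  comp01 (comp01 g1 g2) g3

/-- The quadrilinear 2-functor `F`, `F(α,β,γ,δ) = [[[α,β],γ],δ]`, on 2-cells. -/
def Fq (E : Ell2 K V0 V1 V2 d1 d2) (a b c d : V0 × V1 × V2) : V0 × V1 × V2 :=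
  br2 E (br2 E (br2 E a b) c) d

/-- The quadrilinear 2-functor `G`,
`G(α,β,γ,δ) = [α,[[β,δ],γ]] + [α,[β,[γ,δ]]] + [[[α,δ],γ],β] + [[α,[γ,δ]],β]
  + [[α,γ],[β,δ]] + [[α,δ],[β,γ]]`, on 2-cells. -/
def Gq (E : Ell2 K V0 V1 V2 d1 d2) (a b c d : V0 × V1 × V2) : V0 × V1 × V2 :=
  br2 E a (br2 E (br2 E b d) c) + br2 E a (br2 E b (br2 E c d)) +
    br2 E (br2 E (br2 E a d) c) b + br2 E (br2 E a (br2 E c d)) b +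
    br2 E (br2 E a c) (br2 E b d) + br2 E (br2 E a d) (br2 E b c)

/-- An antisymmetric quadrilinear map `ℓ₄ : V₀⁴ → V₂` satisfying the L∞ condition
`n = 4` (in the form `d ℓ₄(x,y,z,u) − h_{xyzu} + e_{xyzu} = 0`, `ℓ₄(d f,x,y,z) = 0`). -/
structure Ell4 (E : Ell2 K V0 V1 V2 d1 d2) (T : Ell3 E) : Type where
  l4 : V0 → V0 → V0 → V0 → V2
  quad : (∀ x y z, IsLinearMap K (l4 x y z)) ∧
    (∀ x y u, IsLinearMap K (fun z => l4 x y z u)) ∧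
    (∀ x z u, IsLinearMap K (fun y => l4 x y z u)) ∧
    (∀ y z u, IsLinearMap K (fun x => l4 x y z u))
  anti12 : ∀ x y z u, l4 x y z u = -l4 y x z u
  anti23 : ∀ x y z u, l4 x y z u = -l4 x z y u
  anti34 : ∀ x y z u, l4 x y z u = -l4 x y u z
  cond1 : ∀ x y z u,
      d2 (l4 x y z u) - (eta E T x y z u).2 + (eps E T x y z u).2 = 0
  cond2 : ∀ (f : V1) (x y z : V0), l4 (d1 f) x y z = 0

/-- An Identiator: a skew-symmetric quadrilinear 2-modification `μ : η ⇛ ε`. -/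
structure Identiator (E : Ell2 K V0 V1 V2 d1 d2) (T : Ell3 E) : Type where
  mu : V0 → V0 → V0 → V0 → V0 × V1 × V2
  quad : (∀ x y z, IsLinearMap K (mu x y z)) ∧
    (∀ x y u, IsLinearMap K (fun z => mu x y z u)) ∧
    (∀ x z u, IsLinearMap K (fun y => mu x y z u)) ∧
    (∀ y z u, IsLinearMap K (fun x => mu x y z u))
  src : ∀ x y z u, s2 (mu x y z u) = eta E T x y z u
  tgt : ∀ x y z u, t2 d2 (mu x y z u) = eps E T x y z u
  anti12 : ∀ x y z u, (mu x y z u).2.2 = -(mu y x z u).2.2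
  anti23 : ∀ x y z u, (mu x y z u).2.2 = -(mu x z y u).2.2
  anti34 : ∀ x y z u, (mu x y z u).2.2 = -(mu x y u z).2.2
  mod4 : ∀ (x y z u : V0) (f : V1) (a : V2),
      comp02 (Fq E (x, 0, 0) (y, 0, 0) (z, 0, 0) (u, f, a))
          (mu x y z (t1 d1 (t2 d2 (u, f, a)))) =
        comp02 (mu x y z u) (Gq E (x, 0, 0) (y, 0, 0) (z, 0, 0) (u, f, a))
  mod3 : ∀ (x y z u : V0) (f : V1) (a : V2),
      comp02 (Fq E (x, 0, 0) (y, 0, 0) (z, f, a) (u, 0, 0))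
          (mu x y (t1 d1 (t2 d2 (z, f, a))) u) =
        comp02 (mu x y z u) (Gq E (x, 0, 0) (y, 0, 0) (z, f, a) (u, 0, 0))
  mod2 : ∀ (x y z u : V0) (f : V1) (a : V2),
      comp02 (Fq E (x, 0, 0) (y, f, a) (z, 0, 0) (u, 0, 0))
          (mu x (t1 d1 (t2 d2 (y, f, a))) z u) =
        comp02 (mu x y z u) (Gq E (x, 0, 0) (y, f, a) (z, 0, 0) (u, 0, 0))
  mod1 : ∀ (x y z u : V0) (f : V1) (a : V2),
      comp02 (Fq E (x, f, a) (y, 0, 0) (z, 0, 0) (u, 0, 0))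
          (mu (t1 d1 (t2 d2 (x, f, a))) y z u) =
        comp02 (mu x y z u) (Gq E (x, f, a) (y, 0, 0) (z, 0, 0) (u, 0, 0))

end GV

namespace GV

variable {K : Type} [Field K] {V0 V1 V2 : Type}
  [AddCommGroup V0] [AddCommGroup V1] [AddCommGroup V2]
  [Module K V0] [Module K V1] [Module K V2]
  {d1 : V1 →ₗ[K] V0} {d2 : V2 →ₗ[K] V1}

/-- The squared target `t²` of a 2-cell. -/
def tt2 (d1 : V1 →ₗ[K] V0) (d2 : V2 →ₗ[K] V1) (v : V0 × V1 × V2) : V0 :=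
  t1 d1 (t2 d2 v)

/-- Pad a sum `N` of 2-cells by the identity 2-cell `1²_c` on the 0-cell `c`
determined by composability with the previous factor `prev`. -/
def pad2 (d1 : V1 →ₗ[K] V0) (d2 : V2 →ₗ[K] V1) (prev N : V0 × V1 × V2) :
    V0 × V1 × V2 :=
  N + (tt2 d1 d2 prev - N.1, 0, 0)

/-- The inverse `α⁻¹ = (A, r + d a, −a)` of a 2-cell `α = (A, r, a)` for `∘₁`. -/
def inv2 (d2 : V2 →ₗ[K] V1) (a : V0 × V1 × V2) : V0 × V1 × V2 :=
  (a.1, a.2.1 + d2 a.2.2, -a.2.2)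

/-- The Identiator 2-cell associated with `ℓ₄`:
`μ_{xyzu} = ([[[x,y],z],u], h_{xyzu}, −ℓ₄(x,y,z,u))`. -/
def muc (E : Ell2 K V0 V1 V2 d1 d2) (T : Ell3 E) (Q : Ell4 E T) (x y z u : V0) :
    V0 × V1 × V2 :=
  ((eta E T x y z u).1, (eta E T x y z u).2, -Q.l4 x y z u)

/-- The 2-cell `α₁`. -/
def alpha1 (E : Ell2 K V0 V1 V2 d1 d2) (T : Ell3 E) (Q : Ell4 E T)
    (x y z u v : V0) : V0 × V1 × V2 :=
  let f1 := one1 (Jc E T (E.l00 (E.l00 x y) z) u v)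
  let f2 := muc E T Q x y z (E.l00 u v) + br2 E (muc E T Q x y z v) (one1 (one0 u))
  let N3 := one1 (br1 E (Jc E T x (E.l00 z v) y) (one0 u) +
    br1 E (Jc E T (E.l00 x v) z y) (one0 u) + br1 E (Jc E T x z (E.l00 y v)) (one0 u))
  let f3 := pad2 d1 d2 f2 N3
  let N4 := muc E T Q (E.l00 x v) y z u + muc E T Q x (E.l00 y v) z u +
    muc E T Q x y (E.l00 z v) u
  let f4 := pad2 d1 d2 f3 N4
  comp02 (comp02 (comp02 f1 f2) f3) f4

/-- The 2-cell `α₄`. -/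
def alpha4 (E : Ell2 K V0 V1 V2 d1 d2) (T : Ell3 E) (Q : Ell4 E T)
    (x y z u v : V0) : V0 × V1 × V2 :=
  let f1 := br2 E (muc E T Q x y z u) (one1 (one0 v))
  let N2 := one1 (br1 E (Jc E T (E.l00 x u) z y) (one0 v) +
    br1 E (Jc E T x z (E.l00 y u)) (one0 v) + br1 E (Jc E T x (E.l00 z u) y) (one0 v))
  let f2 := pad2 d1 d2 f1 N2
  let f3 := muc E T Q (E.l00 x u) y z v + muc E T Q x (E.l00 y u) z v +
    muc E T Q x y (E.l00 z u) v
  let N4 := one1 (br1 E (br1 E (Jc E T x u v) (one0 z)) (one0 y) +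
    br1 E (Jc E T x u v) (one0 (E.l00 y z)) +
    br1 E (one0 x) (br1 E (Jc E T y u v) (one0 z)) +
    br1 E (br1 E (one0 x) (Jc E T z u v)) (one0 y) +
    br1 E (one0 x) (br1 E (one0 y) (Jc E T z u v)) +
    br1 E (one0 (E.l00 x z)) (Jc E T y u v))
  let f4 := pad2 d1 d2 f3 N4
  comp02 (comp02 (comp02 f1 f2) f3) f4

/-- The 2-cell `α₃`. -/
def alpha3 (E : Ell2 K V0 V1 V2 d1 d2) (T : Ell3 E) (Q : Ell4 E T)
    (x y z u v : V0) : V0 × V1 × V2 :=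
  let f1 := muc E T Q (E.l00 x y) z u v
  let N2 := one1 (br1 E (Jc E T (E.l00 x y) v u) (one0 z))
  let f2 := pad2 d1 d2 f1 N2
  let N3 := br2 E (muc E T Q x y u v) (one1 (one0 z))
  let f3 := pad2 d1 d2 f2 N3
  let f4 := one1 (br1 E (Jc E T x y v) (one0 (E.l00 z u)) +
    Jc E T x y (E.l00 (E.l00 z v) u) + Jc E T x y (E.l00 z (E.l00 u v)) +
    Jc E T (E.l00 (E.l00 x v) u) y z + Jc E T (E.l00 x v) (E.l00 y u) z +
    Jc E T (E.l00 x u) (E.l00 y v) z + Jc E T x (E.l00 (E.l00 y v) u) z +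
    Jc E T (E.l00 x (E.l00 u v)) y z + Jc E T x (E.l00 y (E.l00 u v)) z +
    br1 E (Jc E T x y u) (one0 (E.l00 z v)))
  let N5 := one1 (Jc E T x (E.l00 y v) (E.l00 z u) +
    Jc E T (E.l00 x v) y (E.l00 z u) + Jc E T x (E.l00 y u) (E.l00 z v) +
    Jc E T (E.l00 x u) y (E.l00 z v))
  let f5 := pad2 d1 d2 f4 N5
  comp02 (comp02 (comp02 (comp02 f1 f2) f3) f4) f5

/-- The 2-cell `α₂`. -/
def alpha2 (E : Ell2 K V0 V1 V2 d1 d2) (T : Ell3 E) (Q : Ell4 E T)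
    (x y z u v : V0) : V0 × V1 × V2 :=
  let f1 := one1 (br1 E (br1 E (Jc E T x y z) (one0 u)) (one0 v))
  let f2 := muc E T Q (E.l00 x z) y u v + muc E T Q x (E.l00 y z) u v
  let N3 := one1 (br1 E (one0 x) (Jc E T (E.l00 y z) v u) +
    br1 E (Jc E T (E.l00 x z) v u) (one0 y))
  let f3 := pad2 d1 d2 f2 N3
  let N4 := br2 E (one1 (one0 x)) (muc E T Q y z u v) +
    br2 E (muc E T Q x z u v) (one1 (one0 y))
  let f4 := pad2 d1 d2 f3 N4
  let N5 := one1 (br1 E (Jc E T x z v) (one0 (E.l00 y u)) +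
    br1 E (Jc E T x z u) (one0 (E.l00 y v)) +
    br1 E (one0 (E.l00 x v)) (Jc E T y z u) +
    br1 E (one0 (E.l00 x u)) (Jc E T y z v))
  let f5 := pad2 d1 d2 f4 N5
  comp02 (comp02 (comp02 (comp02 f1 f2) f3) f4) f5

end GV

namespace GV

variable {K : Type} [Field K] {V0 V1 V2 : Type}
  [AddCommGroup V0] [AddCommGroup V1] [AddCommGroup V2]
  [Module K V0] [Module K V1] [Module K V2]

/-- `η_{xyzu}` built from an abstract bracket and Jacobiator. -/
def etaG (d1 : V1 →ₗ[K] V0) (B0 : V0 → V0 → V0)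
    (B1 : V0 × V1 → V0 × V1 → V0 × V1) (J : V0 → V0 → V0 → V0 × V1)
    (x y z u : V0) : V0 × V1 :=
  let g1 := B1 (J x y z) (one0 u)
  let g2 := J (B0 x z) y u + J x (B0 y z) u
  let N3 := B1 (J x z u) (one0 y)
  let g3 := N3 + one0 (t1 d1 g2 - N3.1)
  let N4 := B1 (one0 x) (J y z u)
  let g4 := N4 + one0 (t1 d1 g3 - N4.1)
  comp01 (comp01 (comp01 g1 g2) g3) g4

/-- `ε_{xyzu}` built from an abstract bracket and Jacobiator. -/
def epsG (d1 : V1 →ₗ[K] V0) (B0 : V0 → V0 → V0)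
    (B1 : V0 × V1 → V0 × V1 → V0 × V1) (J : V0 → V0 → V0 → V0 × V1)
    (x y z u : V0) : V0 × V1 :=
  let g1 := J (B0 x y) z u
  let N2 := B1 (J x y u) (one0 z)
  let g2 := N2 + one0 (t1 d1 g1 - N2.1)
  let g3 := J x (B0 y u) z + J (B0 x u) y z + J x y (B0 z u)
  comp01 (comp01 g1 g2) g3

/-- The 2-functor `F` on 2-cells, for an abstract bracket. -/
def FqG (B2 : V0 × V1 × V2 → V0 × V1 × V2 → V0 × V1 × V2)
    (a b c d : V0 × V1 × V2) : V0 × V1 × V2 :=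
  B2 (B2 (B2 a b) c) d

/-- The 2-functor `G` on 2-cells, for an abstract bracket. -/
def GqG (B2 : V0 × V1 × V2 → V0 × V1 × V2 → V0 × V1 × V2)
    (a b c d : V0 × V1 × V2) : V0 × V1 × V2 :=
  B2 a (B2 (B2 b d) c) + B2 a (B2 b (B2 c d)) + B2 (B2 (B2 a d) c) b +
    B2 (B2 a (B2 c d)) b + B2 (B2 a c) (B2 b d) + B2 (B2 a d) (B2 b c)

variable (d1 : V1 →ₗ[K] V0) (d2 : V2 →ₗ[K] V1)
  (B0 : V0 → V0 → V0) (B1 : V0 × V1 → V0 × V1 → V0 × V1)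
  (B2 : V0 × V1 × V2 → V0 × V1 × V2 → V0 × V1 × V2)
  (J : V0 → V0 → V0 → V0 × V1) (mu : V0 → V0 → V0 → V0 → V0 × V1 × V2)

/-- The 2-cell `α₁`, for an abstract bracket, Jacobiator and Identiator. -/
def alpha1G (x y z u v : V0) : V0 × V1 × V2 :=
  let f1 := one1 (J (B0 (B0 x y) z) u v)
  let f2 := mu x y z (B0 u v) + B2 (mu x y z v) (one1 (one0 u))
  let N3 := one1 (B1 (J x (B0 z v) y) (one0 u) + B1 (J (B0 x v) z y) (one0 u) +
    B1 (J x z (B0 y v)) (one0 u))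
  let f3 := pad2 d1 d2 f2 N3
  let N4 := mu (B0 x v) y z u + mu x (B0 y v) z u + mu x y (B0 z v) u
  let f4 := pad2 d1 d2 f3 N4
  comp02 (comp02 (comp02 f1 f2) f3) f4

/-- The 2-cell `α₄`, for an abstract bracket, Jacobiator and Identiator. -/
def alpha4G (x y z u v : V0) : V0 × V1 × V2 :=
  let f1 := B2 (mu x y z u) (one1 (one0 v))
  let N2 := one1 (B1 (J (B0 x u) z y) (one0 v) + B1 (J x z (B0 y u)) (one0 v) +
    B1 (J x (B0 z u) y) (one0 v))
  let f2 := pad2 d1 d2 f1 N2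
  let f3 := mu (B0 x u) y z v + mu x (B0 y u) z v + mu x y (B0 z u) v
  let N4 := one1 (B1 (B1 (J x u v) (one0 z)) (one0 y) + B1 (J x u v) (one0 (B0 y z)) +
    B1 (one0 x) (B1 (J y u v) (one0 z)) + B1 (B1 (one0 x) (J z u v)) (one0 y) +
    B1 (one0 x) (B1 (one0 y) (J z u v)) + B1 (one0 (B0 x z)) (J y u v))
  let f4 := pad2 d1 d2 f3 N4
  comp02 (comp02 (comp02 f1 f2) f3) f4

/-- The 2-cell `α₃`, for an abstract bracket, Jacobiator and Identiator. -/
def alpha3G (x y z u v : V0) : V0 × V1 × V2 :=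
  let f1 := mu (B0 x y) z u v
  let N2 := one1 (B1 (J (B0 x y) v u) (one0 z))
  let f2 := pad2 d1 d2 f1 N2
  let N3 := B2 (mu x y u v) (one1 (one0 z))
  let f3 := pad2 d1 d2 f2 N3
  let f4 := one1 (B1 (J x y v) (one0 (B0 z u)) + J x y (B0 (B0 z v) u) +
    J x y (B0 z (B0 u v)) + J (B0 (B0 x v) u) y z + J (B0 x v) (B0 y u) z +
    J (B0 x u) (B0 y v) z + J x (B0 (B0 y v) u) z + J (B0 x (B0 u v)) y z +
    J x (B0 y (B0 u v)) z + B1 (J x y u) (one0 (B0 z v)))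
  let N5 := one1 (J x (B0 y v) (B0 z u) + J (B0 x v) y (B0 z u) +
    J x (B0 y u) (B0 z v) + J (B0 x u) y (B0 z v))
  let f5 := pad2 d1 d2 f4 N5
  comp02 (comp02 (comp02 (comp02 f1 f2) f3) f4) f5

/-- The 2-cell `α₂`, for an abstract bracket, Jacobiator and Identiator. -/
def alpha2G (x y z u v : V0) : V0 × V1 × V2 :=
  let f1 := one1 (B1 (B1 (J x y z) (one0 u)) (one0 v))
  let f2 := mu (B0 x z) y u v + mu x (B0 y z) u v
  let N3 := one1 (B1 (one0 x) (J (B0 y z) v u) + B1 (J (B0 x z) v u) (one0 y))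
  let f3 := pad2 d1 d2 f2 N3
  let N4 := B2 (one1 (one0 x)) (mu y z u v) + B2 (mu x z u v) (one1 (one0 y))
  let f4 := pad2 d1 d2 f3 N4
  let N5 := one1 (B1 (J x z v) (one0 (B0 y u)) + B1 (J x z u) (one0 (B0 y v)) +
    B1 (one0 (B0 x v)) (J y z u) + B1 (one0 (B0 x u)) (J y z v))
  let f5 := pad2 d1 d2 f4 N5
  comp02 (comp02 (comp02 (comp02 f1 f2) f3) f4) f5

/-- A 3-term Lie infinity algebra on `(V, d)` whose `ℓ₂` vanishes on `V₁ × V₁` and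
whose `ℓ₃` vanishes on triples of total degree 1. -/
structure LInfty3 (K : Type) [Field K] (V0 V1 V2 : Type)
    [AddCommGroup V0] [AddCommGroup V1] [AddCommGroup V2]
    [Module K V0] [Module K V1] [Module K V2]
    (d1 : V1 →ₗ[K] V0) (d2 : V2 →ₗ[K] V1) : Type where
  E2 : Ell2 K V0 V1 V2 d1 d2
  T3 : Ell3 E2
  l4 : V0 → V0 → V0 → V0 → V2
  quad : (∀ x y z, IsLinearMap K (l4 x y z)) ∧
    (∀ x y u, IsLinearMap K (fun z => l4 x y z u)) ∧
    (∀ x z u, IsLinearMap K (fun y => l4 x y z u)) ∧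
    (∀ y z u, IsLinearMap K (fun x => l4 x y z u))
  anti12 : ∀ x y z u, l4 x y z u = -l4 y x z u
  anti23 : ∀ x y z u, l4 x y z u = -l4 x z y u
  anti34 : ∀ x y z u, l4 x y z u = -l4 x y u z
  cond4a : ∀ x y z u,
      d2 (l4 x y z u) - E2.l10 (T3.l3 x y z) u + E2.l10 (T3.l3 x y u) z -
        E2.l10 (T3.l3 x z u) y + E2.l10 (T3.l3 y z u) x +
        T3.l3 (E2.l00 x y) z u - T3.l3 (E2.l00 x z) y u + T3.l3 (E2.l00 x u) y z +
        T3.l3 (E2.l00 y z) x u - T3.l3 (E2.l00 y u) x z + T3.l3 (E2.l00 z u) x y = 0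
  cond4b : ∀ (f : V1) (x y z : V0), l4 (d1 f) x y z = 0
  cond5 : ∀ x y z u v,
      E2.l20 (l4 x y z u) v - E2.l20 (l4 x y z v) u + E2.l20 (l4 x y u v) z -
        E2.l20 (l4 x z u v) y + E2.l20 (l4 y z u v) x +
        l4 (E2.l00 x y) z u v - l4 (E2.l00 x z) y u v + l4 (E2.l00 x u) y z v -
        l4 (E2.l00 x v) y z u + l4 (E2.l00 y z) x u v - l4 (E2.l00 y u) x z v +
        l4 (E2.l00 y v) x z u + l4 (E2.l00 z u) x y v - l4 (E2.l00 z v) x y u +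
        l4 (E2.l00 u v) x y z = 0

/-- A Lie 3-algebra on `G(V)`: an antisymmetric bilinear 2-functor (bracket), a
Jacobiator `J`, an Identiator `μ`, and the coherence law. -/
structure Lie3 (K : Type) [Field K] (V0 V1 V2 : Type)
    [AddCommGroup V0] [AddCommGroup V1] [AddCommGroup V2]
    [Module K V0] [Module K V1] [Module K V2]
    (d1 : V1 →ₗ[K] V0) (d2 : V2 →ₗ[K] V1) : Type where
  Br : Bracket K V0 V1 V2 d1 d2
  J : V0 → V0 → V0 → V0 × V1
  Jtri : (∀ x y, IsLinearMap K (J x y)) ∧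
    (∀ x z, IsLinearMap K (fun y => J x y z)) ∧
    (∀ y z, IsLinearMap K (fun x => J x y z))
  Jsrc : ∀ x y z, (J x y z).1 = Br.B0 (Br.B0 x y) z
  Jtgt : ∀ x y z, t1 d1 (J x y z) = Br.B0 (Br.B0 x z) y + Br.B0 x (Br.B0 y z)
  Janti12 : ∀ x y z, (J x y z).2 = -(J y x z).2
  Janti23 : ∀ x y z, (J x y z).2 = -(J x z y).2
  Jnat3 : ∀ (x y z : V0) (f : V1) (a : V2),
      comp02 (Br.B2 (Br.B2 (x, 0, 0) (y, 0, 0)) (z, f, a))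
          (one1 (J x y (t1 d1 (t2 d2 (z, f, a))))) =
        comp02 (one1 (J x y z))
          (Br.B2 (Br.B2 (x, 0, 0) (z, f, a)) (y, 0, 0) +
            Br.B2 (x, 0, 0) (Br.B2 (y, 0, 0) (z, f, a)))
  Jnat1 : ∀ (x y z : V0) (f : V1) (a : V2),
      comp02 (Br.B2 (Br.B2 (x, f, a) (y, 0, 0)) (z, 0, 0))
          (one1 (J (t1 d1 (t2 d2 (x, f, a))) y z)) =
        comp02 (one1 (J x y z))
          (Br.B2 (Br.B2 (x, f, a) (z, 0, 0)) (y, 0, 0) +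
            Br.B2 (x, f, a) (Br.B2 (y, 0, 0) (z, 0, 0)))
  Jnat2 : ∀ (x y z : V0) (f : V1) (a : V2),
      comp02 (Br.B2 (Br.B2 (x, 0, 0) (y, f, a)) (z, 0, 0))
          (one1 (J x (t1 d1 (t2 d2 (y, f, a))) z)) =
        comp02 (one1 (J x y z))
          (Br.B2 (Br.B2 (x, 0, 0) (z, 0, 0)) (y, f, a) +
            Br.B2 (x, 0, 0) (Br.B2 (y, f, a) (z, 0, 0)))
  mu : V0 → V0 → V0 → V0 → V0 × V1 × V2
  muquad : (∀ x y z, IsLinearMap K (mu x y z)) ∧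
    (∀ x y u, IsLinearMap K (fun z => mu x y z u)) ∧
    (∀ x z u, IsLinearMap K (fun y => mu x y z u)) ∧
    (∀ y z u, IsLinearMap K (fun x => mu x y z u))
  musrc : ∀ x y z u, s2 (mu x y z u) = etaG d1 Br.B0 Br.B1 J x y z u
  mutgt : ∀ x y z u, t2 d2 (mu x y z u) = epsG d1 Br.B0 Br.B1 J x y z u
  muanti12 : ∀ x y z u, (mu x y z u).2.2 = -(mu y x z u).2.2
  muanti23 : ∀ x y z u, (mu x y z u).2.2 = -(mu x z y u).2.2
  muanti34 : ∀ x y z u, (mu x y z u).2.2 = -(mu x y u z).2.2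
  mumod4 : ∀ (x y z u : V0) (f : V1) (a : V2),
      comp02 (FqG Br.B2 (x, 0, 0) (y, 0, 0) (z, 0, 0) (u, f, a))
          (mu x y z (t1 d1 (t2 d2 (u, f, a)))) =
        comp02 (mu x y z u) (GqG Br.B2 (x, 0, 0) (y, 0, 0) (z, 0, 0) (u, f, a))
  mumod3 : ∀ (x y z u : V0) (f : V1) (a : V2),
      comp02 (FqG Br.B2 (x, 0, 0) (y, 0, 0) (z, f, a) (u, 0, 0))
          (mu x y (t1 d1 (t2 d2 (z, f, a))) u) =
        comp02 (mu x y z u) (GqG Br.B2 (x, 0, 0) (y, 0, 0) (z, f, a) (u, 0, 0))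
  mumod2 : ∀ (x y z u : V0) (f : V1) (a : V2),
      comp02 (FqG Br.B2 (x, 0, 0) (y, f, a) (z, 0, 0) (u, 0, 0))
          (mu x (t1 d1 (t2 d2 (y, f, a))) z u) =
        comp02 (mu x y z u) (GqG Br.B2 (x, 0, 0) (y, f, a) (z, 0, 0) (u, 0, 0))
  mumod1 : ∀ (x y z u : V0) (f : V1) (a : V2),
      comp02 (FqG Br.B2 (x, f, a) (y, 0, 0) (z, 0, 0) (u, 0, 0))
          (mu (t1 d1 (t2 d2 (x, f, a))) y z u) =
        comp02 (mu x y z u) (GqG Br.B2 (x, f, a) (y, 0, 0) (z, 0, 0) (u, 0, 0))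
  coherence : ∀ x y z u v : V0,
      alpha1G d1 d2 Br.B0 Br.B1 Br.B2 J mu x y z u v + inv2 d2 (alpha4G d1 d2 Br.B0 Br.B1 Br.B2 J mu x y z u v) =
        alpha3G d1 d2 Br.B0 Br.B1 Br.B2 J mu x y z u v + inv2 d2 (alpha2G d1 d2 Br.B0 Br.B1 Br.B2 J mu x y z u v)

end GV

/-!
A cell of `G(V)` is a tuple of elements of the `Vᵢ`, so an equation between cells is a list of
equations between components, and the correspondence is checked one structure map at a time.

* Functoriality of the bracket with respect to composition is an interchange law. Decomposing a cell
  into an identity on a 0-cell and cells of source zero, it leaves no freedom besides the values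
  `[x, g]` and `[x, b]` on an object and a cell of source zero. The only remaining conditions are
  `[d f, g] = [f, d g]` and `[d f, b] = 0`, i.e. the chain map conditions for an `ℓ₂` vanishing on
  `V₁ × V₁`.
* A natural 2-transformation with the prescribed source is determined by its `V₁`-component `ℓ₃`.
  Its target condition and the two components of naturality are the conditions `n = 3` in total
  degree 0, 1 and 2.
* The source of a 2-modification `μ : η ⇒ ε` is prescribed, so `μ` is determined by its
  `V₂`-component `-ℓ₄`. Its target condition is the condition `n = 4` on `V₀⁴`. Since `η` is itself
  natural, the modification property reduces to `ℓ₄ (d f, y, z, u) = 0`.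
* The 2-cells `α₄` and `α₃` are composable along 1-cells, and so are `α₂` and `α₁`. The coherence
  law therefore says that `α₄ ∘₁ α₃ = α₂ ∘₁ α₁`, and of this only the `V₂`-component, which is the
  condition `n = 5`, is not automatic.
-/

namespace GV

section Multilinear

variable {R M N P Q : Type*} [CommSemiring R] [AddCommMonoid M] [AddCommMonoid N]
  [AddCommMonoid P] [AddCommMonoid Q] [Module R M] [Module R N] [Module R P] [Module R Q]

/-- The bundled bilinear map given by a function that is linear in each of its two arguments. -/
def mkBilinear (f : M → N → P)
    (h : (∀ x, IsLinearMap R (f x)) ∧ ∀ y, IsLinearMap R (fun x => f x y)) :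
    M →ₗ[R] N →ₗ[R] P :=
  LinearMap.mk₂ R f (fun _ _ y => (h.2 y).map_add _ _) (fun _ _ y => (h.2 y).map_smul _ _)
    (fun x => (h.1 x).map_add) (fun c x => (h.1 x).map_smul c)

/-- The bundled trilinear map given by a function that is linear in each of its three arguments. -/
def mkTrilinear (f : M → N → P → Q)
    (h : (∀ x y, IsLinearMap R (f x y)) ∧ (∀ x z, IsLinearMap R (fun y => f x y z)) ∧
      ∀ y z, IsLinearMap R (fun x => f x y z)) :
    M →ₗ[R] N →ₗ[R] P →ₗ[R] Q :=
  LinearMap.mk₂ R (fun x y => (h.1 x y).mk')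
    (fun _ _ y => LinearMap.ext fun z => (h.2.2 y z).map_add _ _)
    (fun _ _ y => LinearMap.ext fun z => (h.2.2 y z).map_smul _ _)
    (fun x _ _ => LinearMap.ext fun z => (h.2.1 x z).map_add _ _)
    (fun _ x _ => LinearMap.ext fun z => (h.2.1 x z).map_smul _ _)

theorem isLinearMap_apply_apply (f : M →ₗ[R] N →ₗ[R] P) :
    (∀ x, IsLinearMap R (fun y => f x y)) ∧ ∀ y, IsLinearMap R (fun x => f x y) :=
  ⟨fun x => (f x).isLinear, fun y => (f.flip y).isLinear⟩

theorem isLinearMap_of_antisymm {R M N : Type*} [Ring R] [AddCommGroup N] [AddCommGroup M]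
    [Module R M] [Module R N] {f : M → M → N} (hf : ∀ v w, f v w = -f w v)
    (h : ∀ v, IsLinearMap R (f v)) :
    (∀ v, IsLinearMap R (f v)) ∧ ∀ w, IsLinearMap R (fun v => f v w) :=
  ⟨h, fun w =>
    ⟨fun v v' => by simp only [hf _ w, (h w).map_add, neg_add],
      fun c v => by simp only [hf _ w, (h w).map_smul, smul_neg]⟩⟩

end Multilinear

theorem add_inv2_eq_add_inv2_iff {K : Type} [Field K] {V0 V1 V2 : Type} [AddCommGroup V0]
    [AddCommGroup V1] [AddCommGroup V2] [Module K V1] [Module K V2] {d2 : V2 →ₗ[K] V1}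
    {α₁ α₂ α₃ α₄ : V0 × V1 × V2} (h₄₃ : Comp12 d2 α₄ α₃) (h₂₁ : Comp12 d2 α₂ α₁) :
    α₁ + inv2 d2 α₄ = α₃ + inv2 d2 α₂ ↔ α₂.2.2 + α₁.2.2 = α₄.2.2 + α₃.2.2 := by
  simp only [Comp12, t2, s2, Prod.ext_iff] at h₄₃ h₂₁
  simp only [inv2, Prod.ext_iff, Prod.fst_add, Prod.snd_add, h₄₃, h₂₁, add_comm α₁.1,
    add_comm α₁.2.1, true_and]
  rw [← sub_eq_add_neg, ← sub_eq_add_neg, sub_eq_sub_iff_add_eq_add, add_comm, add_comm α₃.2.2]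

variable {K : Type} [Field K] {V0 V1 V2 : Type}
  [AddCommGroup V0] [AddCommGroup V1] [AddCommGroup V2]
  [Module K V0] [Module K V1] [Module K V2]
  {d1 : V1 →ₗ[K] V0} {d2 : V2 →ₗ[K] V1}

theorem t1_t2 (hdd : ∀ a, d1 (d2 a) = 0) (x : V0) (f : V1) (a : V2) :
    t1 d1 (t2 d2 (x, f, a)) = x + d1 f := by
  simp only [t1, t2, map_add, hdd, add_zero]

namespace Ell2

variable (E : Ell2 K V0 V1 V2 d1 d2)

/-- The component `V₀ × V₀ → V₀` of `ℓ₂`, bundled as a bilinear map. -/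
def br₀ : V0 →ₗ[K] V0 →ₗ[K] V0 := mkBilinear E.l00 E.bil00

/-- The component `V₀ × V₁ → V₁` of `ℓ₂`, bundled as a bilinear map. Antisymmetry makes the
component `V₁ × V₀ → V₁` its negative, so only this one is used in computations. -/
def act₁ : V0 →ₗ[K] V1 →ₗ[K] V1 := mkBilinear E.l01 E.bil01

/-- The component `V₀ × V₂ → V₂` of `ℓ₂`, bundled as a bilinear map; the component
`V₂ × V₀ → V₂` is its negative. -/
def act₂ : V0 →ₗ[K] V2 →ₗ[K] V2 := mkBilinear E.l02 E.bil02

theorem l00_eq (x y : V0) : E.l00 x y = E.br₀ x y := rfl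

theorem l01_eq (x : V0) (f : V1) : E.l01 x f = E.act₁ x f := rfl

theorem l02_eq (x : V0) (a : V2) : E.l02 x a = E.act₂ x a := rfl

theorem l10_eq (f : V1) (x : V0) : E.l10 f x = -E.act₁ x f := E.anti10 f x

theorem l20_eq (a : V2) (x : V0) : E.l20 a x = -E.act₂ x a := E.anti20 a x

theorem br₀_antisymm (x y : V0) : E.br₀ x y = -E.br₀ y x := E.anti00 x y

theorem d1_act₁ (x : V0) (f : V1) : d1 (E.act₁ x f) = E.br₀ x (d1 f) := E.chain01 x f

theorem d2_act₂ (x : V0) (a : V2) : d2 (E.act₂ x a) = E.act₁ x (d2 a) := E.chain02 x a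

theorem br₀_d1_left (f : V1) (x : V0) : E.br₀ (d1 f) x = -d1 (E.act₁ x f) := by
  rw [E.br₀_antisymm, E.d1_act₁]

theorem act₁_d1_antisymm (f g : V1) : E.act₁ (d1 f) g = -E.act₁ (d1 g) f := by
  have h := E.chain11 f g
  rw [E.vanish11, map_zero, E.l10_eq, E.l01_eq, sub_neg_eq_add] at h
  exact eq_neg_of_add_eq_zero_left h.symm

theorem act₁_d1_d2 (hdd : ∀ a, d1 (d2 a) = 0) (f : V1) (a : V2) :
    E.act₁ (d1 f) (d2 a) = 0 := by
  rw [E.act₁_d1_antisymm, hdd, map_zero, LinearMap.zero_apply, neg_zero]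

theorem act₂_d1 (f : V1) (a : V2) : E.act₂ (d1 f) a = 0 := by
  have h := E.chain12 f a
  rw [E.vanish11, sub_zero] at h
  exact h.symm

theorem br1_eq (v w : V0 × V1) :
    br1 E v w = (E.br₀ v.1 w.1, E.act₁ v.1 w.2 - E.act₁ (w.1 + d1 w.2) v.2) := by
  simp only [br1, E.l00_eq, E.l01_eq, E.l10_eq, sub_eq_add_neg]

theorem br2_eq (v w : V0 × V1 × V2) :
    br2 E v w = (E.br₀ v.1 w.1, E.act₁ v.1 w.2.1 - E.act₁ (w.1 + d1 w.2.1) v.2.1,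
      E.act₂ v.1 w.2.2 - E.act₂ w.1 v.2.2) := by
  simp only [br2, E.l00_eq, E.l01_eq, E.l10_eq, E.l02_eq, E.l20_eq, sub_eq_add_neg]

theorem br2_object_left (x y : V0) (g : V1) (b : V2) :
    br2 E (x, 0, 0) (y, g, b) = (E.br₀ x y, E.act₁ x g, E.act₂ x b) := by
  simp only [br2_eq, map_zero, sub_zero]

theorem br2_object_right (x y : V0) (f : V1) (a : V2) :
    br2 E (x, f, a) (y, 0, 0) = (E.br₀ x y, -E.act₁ y f, -E.act₂ y a) := by
  simp only [br2_eq, map_zero, add_zero, zero_sub]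

theorem br2_object_object (x y : V0) :
    br2 E (x, 0, 0) (y, 0, 0) = (E.br₀ x y, 0, 0) := by
  simp only [br2_object_left, map_zero]

theorem br1_antisymm (v w : V0 × V1) : br1 E v w = -br1 E w v := by
  simp only [br1_eq, Prod.neg_mk, E.br₀_antisymm v.1, map_add, LinearMap.add_apply,
    E.act₁_d1_antisymm v.2]
  congr 1
  abel

theorem br2_antisymm (v w : V0 × V1 × V2) : br2 E v w = -br2 E w v := by
  simp only [br2_eq, Prod.neg_mk, E.br₀_antisymm v.1, map_add, LinearMap.add_apply,
    E.act₁_d1_antisymm v.2.1]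
  congr 2 <;> abel

theorem br1_isLinearMap (v : V0 × V1) : IsLinearMap K (br1 E v) where
  map_add w w' := by
    simp only [br1_eq, Prod.fst_add, Prod.snd_add, map_add, LinearMap.add_apply, Prod.mk_add_mk]
    congr 1
    abel
  map_smul c w := by
    simp only [br1_eq, Prod.smul_fst, Prod.smul_snd, map_add, map_smul, LinearMap.add_apply,
      LinearMap.smul_apply, Prod.smul_mk, smul_sub, smul_add]

theorem br2_isLinearMap (v : V0 × V1 × V2) : IsLinearMap K (br2 E v) where
  map_add w w' := by
    simp only [br2_eq, Prod.fst_add, Prod.snd_add, map_add, LinearMap.add_apply, Prod.mk_add_mk]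
    congr 2 <;> abel
  map_smul c w := by
    simp only [br2_eq, Prod.smul_fst, Prod.smul_snd, map_add, map_smul, LinearMap.add_apply,
      LinearMap.smul_apply, Prod.smul_mk, smul_sub, smul_add]

theorem t1_br1 (v w : V0 × V1) : t1 d1 (br1 E v w) = E.br₀ (t1 d1 v) (t1 d1 w) := by
  simp only [br1_eq, t1, map_add, map_sub, LinearMap.add_apply, E.br₀_d1_left, ← E.d1_act₁]
  abel

theorem t2_br2 (hdd : ∀ a, d1 (d2 a) = 0) (v w : V0 × V1 × V2) :
    t2 d2 (br2 E v w) = br1 E (t2 d2 v) (t2 d2 w) := by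
  simp only [br1_eq, br2_eq, t2, map_add, map_sub, LinearMap.add_apply, E.d2_act₂, hdd, add_zero,
    E.act₁_d1_d2 hdd]
  congr 1
  abel

theorem br1_comp01 {v v' w w' : V0 × V1} (hv : Comp01 d1 v v') (hw : Comp01 d1 w w') :
    br1 E (comp01 v v') (comp01 w w') = comp01 (br1 E v w) (br1 E v' w') := by
  simp only [Comp01, t1, s1] at hv hw
  simp only [br1_eq, comp01, ← hv, ← hw, map_add, LinearMap.add_apply,
    E.act₁_d1_antisymm v.2 w'.2]
  congr 1
  abel

theorem br2_comp02 (hdd : ∀ a, d1 (d2 a) = 0) {v v' w w' : V0 × V1 × V2}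
    (hv : Comp02 d1 d2 v v') (hw : Comp02 d1 d2 w w') :
    br2 E (comp02 v v') (comp02 w w') = comp02 (br2 E v w) (br2 E v' w') := by
  simp only [Comp02, t1, t2, s1, s2, map_add, hdd, add_zero] at hv hw
  simp only [br2_eq, comp02, ← hv, ← hw, map_add, LinearMap.add_apply,
    E.act₁_d1_antisymm v.2.1 w'.2.1, E.act₂_d1]
  congr 2 <;> abel

theorem br2_comp12 {v v' w w' : V0 × V1 × V2} (hv : Comp12 d2 v v') (hw : Comp12 d2 w w') :
    br2 E (comp12 v v') (comp12 w w') = comp12 (br2 E v w) (br2 E v' w') := by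
  simp only [Comp12, t2, s2, Prod.ext_iff] at hv hw
  simp only [br2_eq, comp12, ← hv.1, ← hw.1, map_add]
  congr 2
  abel

/-- The antisymmetric bilinear 2-functor associated with `ℓ₂`. -/
def toBracket (hdd : ∀ a, d1 (d2 a) = 0) : Bracket K V0 V1 V2 d1 d2 where
  B0 := E.l00
  B1 := br1 E
  B2 := br2 E
  bil0 := E.bil00
  bil1 := isLinearMap_of_antisymm E.br1_antisymm E.br1_isLinearMap
  bil2 := isLinearMap_of_antisymm E.br2_antisymm E.br2_isLinearMap
  anti0 := E.anti00
  anti1 := E.br1_antisymm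
  anti2 := E.br2_antisymm
  maps_s1 _ _ := rfl
  maps_t1 := E.t1_br1
  maps_s2 _ _ := rfl
  maps_t2 := E.t2_br2 hdd
  maps_one0 x y := by simp [br1_eq, one0, E.l00_eq]
  maps_one1 v w := by simp [br1_eq, br2_eq, one1]
  maps_comp01 _ _ _ _ := E.br1_comp01
  maps_comp02 _ _ _ _ := E.br2_comp02 hdd
  maps_comp12 _ _ _ _ := E.br2_comp12

end Ell2

namespace Bracket

variable (S : Bracket K V0 V1 V2 d1 d2)

theorem B1_fst (v w : V0 × V1) : (S.B1 v w).1 = S.B0 v.1 w.1 := S.maps_s1 v w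

theorem B2_fst (v w : V0 × V1 × V2) : (S.B2 v w).1 = S.B0 v.1 w.1 :=
  (congrArg Prod.fst (S.maps_s2 v w)).trans (S.B1_fst _ _)

theorem B2_snd_fst (v w : V0 × V1 × V2) :
    (S.B2 v w).2.1 = (S.B1 (v.1, v.2.1) (w.1, w.2.1)).2 :=
  congrArg Prod.snd (S.maps_s2 v w)

theorem B1_zero_right (v : V0 × V1) : S.B1 v 0 = 0 := (S.bil1.1 v).map_zero

theorem B2_zero_right (v : V0 × V1 × V2) : S.B2 v 0 = 0 := (S.bil2.1 v).map_zero

theorem B2_zero_left (v : V0 × V1 × V2) : S.B2 0 v = 0 := (S.bil2.2 v).map_zero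

theorem B1_one0_snd (x y : V0) : (S.B1 (x, 0) (y, 0)).2 = 0 :=
  congrArg Prod.snd (S.maps_one0 x y)

theorem B2_one1_snd_snd (x y : V0) (f g : V1) : (S.B2 (x, f, 0) (y, g, 0)).2.2 = 0 :=
  congrArg (fun v => v.2.2) (S.maps_one1 (x, f) (y, g))

-- Interchange law: `(0, f) = (0, f) ∘₀ 1_{d f}` and `(0, g) = 1_0 ∘₀ (0, g)`.
theorem B1_arrow_arrow_snd_eq_left (f g : V1) :
    (S.B1 (0, f) (0, g)).2 = (S.B1 (d1 f, 0) (0, g)).2 := by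
  have h := S.maps_comp01 (0, f) (d1 f, 0) 0 (0, g) (by simp [Comp01, t1, s1])
    (by simp [Comp01, t1, s1])
  simpa [comp01, S.B1_zero_right] using congrArg Prod.snd h

theorem B1_arrow_arrow_snd_eq_right (f g : V1) :
    (S.B1 (0, f) (0, g)).2 = (S.B1 (0, f) (d1 g, 0)).2 := by
  rw [S.anti1 (0, f), Prod.snd_neg, S.B1_arrow_arrow_snd_eq_left, S.anti1 (0, f), Prod.snd_neg]

-- Interchange law: `(0, f, a) = 1²_0 ∘₀ (0, f, a)` and `(0, 0, b) = (0, 0, b) ∘₀ 1²_0`.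
theorem B2_arrow_top_snd_snd (hdd : ∀ a, d1 (d2 a) = 0) (f : V1) (a b : V2) :
    (S.B2 (0, f, a) (0, 0, b)).2.2 = 0 := by
  have h := S.maps_comp02 0 (0, f, a) (0, 0, b) 0 (by simp [Comp02, t1, t2, s1, s2])
    (by simp [Comp02, t1, t2, s1, s2, hdd])
  simpa [comp02, S.B2_zero_left, S.B2_zero_right] using congrArg (fun v => v.2.2) h

theorem B2_d1_top_snd_snd (hdd : ∀ a, d1 (d2 a) = 0) (f : V1) (b : V2) :
    (S.B2 (d1 f, 0, 0) (0, 0, b)).2.2 = 0 := by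
  have h := S.maps_comp02 (0, f, 0) (d1 f, 0, 0) 0 (0, 0, b) (by simp [Comp02, t1, t2, s1, s2])
    (by simp [Comp02, t1, t2, s1, s2])
  simpa [comp02, S.B2_zero_right, S.B2_arrow_top_snd_snd hdd] using
    (congrArg (fun v => v.2.2) h).symm

theorem d1_B1_snd (v w : V0 × V1) :
    d1 (S.B1 v w).2 = S.B0 (v.1 + d1 v.2) (w.1 + d1 w.2) - S.B0 v.1 w.1 := by
  rw [← S.B1_fst]
  exact eq_sub_of_add_eq' (S.maps_t1 v w)

theorem d2_B2_snd_snd (v w : V0 × V1 × V2) :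
    d2 (S.B2 v w).2.2 =
      (S.B1 (v.1, v.2.1 + d2 v.2.2) (w.1, w.2.1 + d2 w.2.2)).2 -
        (S.B1 (v.1, v.2.1) (w.1, w.2.1)).2 := by
  rw [← S.B2_snd_fst]
  exact eq_sub_of_add_eq' (congrArg Prod.snd (S.maps_t2 v w))

/-- The `V₁`-component of the bracket of 1-cells, bundled as a bilinear map. -/
def top₁ : (V0 × V1) →ₗ[K] (V0 × V1) →ₗ[K] V1 :=
  (mkBilinear S.B1 S.bil1).compr₂ (LinearMap.snd K V0 V1)

/-- The `V₂`-component of the bracket of 2-cells, bundled as a bilinear map. -/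
def top₂ : (V0 × V1 × V2) →ₗ[K] (V0 × V1 × V2) →ₗ[K] V2 :=
  (mkBilinear S.B2 S.bil2).compr₂ (LinearMap.snd K V1 V2 ∘ₗ LinearMap.snd K V0 (V1 × V2))

/-- The map `ℓ₂` extracted from an antisymmetric bilinear 2-functor, by bracketing an identity
cell on a 0-cell with a cell of source zero. -/
def toEll2 (hdd : ∀ a, d1 (d2 a) = 0) : Ell2 K V0 V1 V2 d1 d2 where
  l00 := S.B0
  l01 x g := (S.B1 (x, 0) (0, g)).2
  l10 f y := (S.B1 (0, f) (y, 0)).2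
  l02 x b := (S.B2 (x, 0, 0) (0, 0, b)).2.2
  l20 a y := (S.B2 (0, 0, a) (y, 0, 0)).2.2
  l11 _ _ := 0
  bil00 := S.bil0
  bil01 := isLinearMap_apply_apply (S.top₁.compl₁₂ (.inl K V0 V1) (.inr K V0 V1))
  bil10 := isLinearMap_apply_apply (S.top₁.compl₁₂ (.inr K V0 V1) (.inl K V0 V1))
  bil02 := isLinearMap_apply_apply
    (S.top₂.compl₁₂ (.inl K V0 (V1 × V2)) (.inr K V0 (V1 × V2) ∘ₗ .inr K V1 V2))
  bil20 := isLinearMap_apply_apply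
    (S.top₂.compl₁₂ (.inr K V0 (V1 × V2) ∘ₗ .inr K V1 V2) (.inl K V0 (V1 × V2)))
  bil11 := isLinearMap_apply_apply (0 : V1 →ₗ[K] V1 →ₗ[K] V2)
  anti00 := S.anti0
  anti10 f y := congrArg Prod.snd (S.anti1 (0, f) (y, 0))
  anti20 a y := congrArg (fun v => v.2.2) (S.anti2 (0, 0, a) (y, 0, 0))
  anti11 _ _ := rfl
  chain01 x g := by simp [S.d1_B1_snd, (S.bil0.1 _).map_zero]
  chain10 f y := by simp [S.d1_B1_snd, (S.bil0.2 _).map_zero]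
  chain02 x b := by simp [S.d2_B2_snd_snd, S.B1_one0_snd]
  chain20 a y := by simp [S.d2_B2_snd_snd, S.B1_one0_snd]
  chain11 f g := by
    rw [map_zero, ← S.B1_arrow_arrow_snd_eq_left, S.B1_arrow_arrow_snd_eq_right, sub_self]
  chain12 f b := by rw [S.B2_d1_top_snd_snd hdd, sub_zero]
  vanish11 _ _ := rfl

variable (hdd : ∀ a, d1 (d2 a) = 0)

theorem br1_toEll2 (v w : V0 × V1) : br1 (S.toEll2 hdd) v w = S.B1 v w := by
  obtain ⟨x, f⟩ := v
  obtain ⟨y, g⟩ := w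
  refine Prod.ext (S.B1_fst _ _).symm ?_
  have hv : ((x, f) : V0 × V1) = (x, 0) + (0, f) := by simp
  have hw : ((y, g) : V0 × V1) = (y, 0) + (0, g) := by simp
  calc (S.B1 (x, 0) (0, g)).2 + (S.B1 (0, f) (y + d1 g, 0)).2
      = (S.B1 (x, 0) (0, g)).2 + ((S.B1 (0, f) (y, 0)).2 + (S.B1 (0, f) (d1 g, 0)).2) :=
        congrArg _ (((S.toEll2 hdd).bil10.1 f).map_add y (d1 g))
    _ = (S.B1 (x, f) (y, g)).2 := by
        simp only [hv, hw, (S.bil1.1 _).map_add, (S.bil1.2 _).map_add, Prod.snd_add,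
          S.B1_one0_snd, S.B1_arrow_arrow_snd_eq_right]
        abel

theorem br2_toEll2 (v w : V0 × V1 × V2) : br2 (S.toEll2 hdd) v w = S.B2 v w := by
  obtain ⟨x, f, a⟩ := v
  obtain ⟨y, g, b⟩ := w
  refine Prod.ext (S.B2_fst _ _).symm (Prod.ext ?_ ?_)
  · rw [S.B2_snd_fst, ← S.br1_toEll2 hdd]
    rfl
  have hv : ((x, f, a) : V0 × V1 × V2) = (x, 0, 0) + (0, f, 0) + (0, 0, a) := by simp
  have hw : ((y, g, b) : V0 × V1 × V2) = (y, 0, 0) + (0, g, 0) + (0, 0, b) := by simp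
  have top_arrow : (S.B2 (0, 0, a) (0, g, 0)).2.2 = 0 := by
    rw [S.anti2, Prod.snd_neg, Prod.snd_neg, S.B2_arrow_top_snd_snd hdd, neg_zero]
  calc (S.B2 (x, 0, 0) (0, 0, b)).2.2 + (S.B2 (0, 0, a) (y, 0, 0)).2.2
      = (S.B2 (x, f, a) (y, g, b)).2.2 := by
        simp only [hv, hw, (S.bil2.1 _).map_add, (S.bil2.2 _).map_add, Prod.snd_add,
          S.B2_one1_snd_snd, S.B2_arrow_top_snd_snd hdd, top_arrow]
        abel

theorem toBracket_toEll2 : (S.toEll2 hdd).toBracket hdd = S := by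
  have h1 : br1 (S.toEll2 hdd) = S.B1 := funext₂ (S.br1_toEll2 hdd)
  have h2 : br2 (S.toEll2 hdd) = S.B2 := funext₂ (S.br2_toEll2 hdd)
  cases S
  simp only [Ell2.toBracket, h1, h2]
  rfl

end Bracket

theorem Ell2.toEll2_toBracket (E : Ell2 K V0 V1 V2 d1 d2) (hdd : ∀ a, d1 (d2 a) = 0) :
    (E.toBracket hdd).toEll2 hdd = E := by
  have h01 : ∀ x g, (br1 E (x, 0) (0, g)).2 = E.l01 x g := by simp [br1_eq, l01_eq]
  have h10 : ∀ f y, (br1 E (0, f) (y, 0)).2 = E.l10 f y := by simp [br1_eq, l10_eq]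
  have h02 : ∀ x b, (br2 E (x, 0, 0) (0, 0, b)).2.2 = E.l02 x b := by
    simp [br2_object_left, l02_eq]
  have h20 : ∀ a y, (br2 E (0, 0, a) (y, 0, 0)).2.2 = E.l20 a y := by
    simp [br2_object_right, l20_eq]
  have h11 : E.l11 = fun _ _ => 0 := funext₂ E.vanish11
  simp only [Bracket.toEll2, toBracket, h01, h10, h02, h20]
  cases E
  cases h11
  rfl

/-- The correspondence between maps `ℓ₂` and antisymmetric bilinear 2-functors. -/
def Ell2.equivBracket (hdd : ∀ a, d1 (d2 a) = 0) :
    Ell2 K V0 V1 V2 d1 d2 ≃ Bracket K V0 V1 V2 d1 d2 where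
  toFun E := E.toBracket hdd
  invFun S := S.toEll2 hdd
  left_inv E := E.toEll2_toBracket hdd
  right_inv S := S.toBracket_toEll2 hdd

section Jacobiator

variable {E : Ell2 K V0 V1 V2 d1 d2}

namespace Ell3

variable (T : Ell3 E)

/-- The trilinear map `ℓ₃ : V₀³ → V₁`, bundled. -/
def jac : V0 →ₗ[K] V0 →ₗ[K] V0 →ₗ[K] V1 := mkTrilinear T.l3 T.tri

theorem l3_eq (x y z : V0) : T.l3 x y z = T.jac x y z := rfl

theorem jac_antisymm₁₂ (x y z : V0) : T.jac x y z = -T.jac y x z := T.anti12 x y z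

theorem jac_antisymm₂₃ (x y z : V0) : T.jac x y z = -T.jac x z y := T.anti23 x y z

theorem jac_rotate (x y z : V0) : T.jac x y z = T.jac z x y := by
  rw [T.jac_antisymm₂₃, T.jac_antisymm₁₂, neg_neg]

theorem d1_jac (x y z : V0) :
    d1 (T.jac x y z) = E.br₀ (E.br₀ x z) y + E.br₀ x (E.br₀ y z) - E.br₀ (E.br₀ x y) z := by
  have h := T.cond1 x y z
  simp only [l3_eq, E.l00_eq] at h
  rw [E.br₀_antisymm x (E.br₀ y z), ← sub_eq_zero, ← h]
  abel

theorem jac_d1_fst (f : V1) (y z : V0) :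
    T.jac (d1 f) y z =
      E.act₁ y (E.act₁ z f) - E.act₁ z (E.act₁ y f) - E.act₁ (E.br₀ y z) f := by
  have h := T.cond2 y z f
  simp only [l3_eq, E.l00_eq, E.l01_eq, E.l10_eq] at h
  rw [← sub_eq_zero, ← h]
  abel

theorem jac_d1_snd (x : V0) (f : V1) (z : V0) :
    T.jac x (d1 f) z =
      E.act₁ (E.br₀ x z) f - E.act₁ x (E.act₁ z f) + E.act₁ z (E.act₁ x f) := by
  rw [T.jac_antisymm₁₂, T.jac_d1_fst]
  abel

theorem jac_d1_trd (x y : V0) (f : V1) :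
    T.jac x y (d1 f) =
      E.act₁ x (E.act₁ y f) - E.act₁ y (E.act₁ x f) - E.act₁ (E.br₀ x y) f := by
  rw [T.jac_rotate, T.jac_d1_fst]

theorem act₂_br₀ (T : Ell3 E) (x y : V0) (a : V2) :
    E.act₂ (E.br₀ x y) a = E.act₂ x (E.act₂ y a) - E.act₂ y (E.act₂ x a) := by
  have h := T.cond3 x y a
  simp only [E.l00_eq, E.l02_eq, E.l20_eq] at h
  rw [← sub_eq_zero, ← h]
  abel

/-- The Jacobiator `J_{xyz} = ([[x,y],z], ℓ₃(x,y,z))`. -/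
def toJacobiator (hdd : ∀ a, d1 (d2 a) = 0) : Jacobiator E where
  J := Jc E T
  tri := by
    refine ⟨fun x y => ⟨fun _ _ => ?_, fun _ _ => ?_⟩, fun x z => ⟨fun _ _ => ?_, fun _ _ => ?_⟩,
      fun y z => ⟨fun _ _ => ?_, fun _ _ => ?_⟩⟩ <;>
    simp [Jc, E.l00_eq, T.l3_eq]
  src _ _ _ := rfl
  tgt x y z := by simp [t1, Jc, T.l3_eq, E.l00_eq, T.d1_jac]
  anti12 := T.anti12
  anti23 := T.anti23
  nat3 x y z f a := by
    simp only [E.br2_object_left, E.br2_object_right, map_zero, comp02, one1, t1_t2 hdd, Jc,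
      E.l00_eq, T.l3_eq, map_add, T.jac_d1_trd, T.act₂_br₀, Prod.mk_add_mk]
    congr 2 <;> abel
  nat1 x y z f a := by
    simp only [E.br2_object_left, E.br2_object_right, map_zero, map_neg, comp02, one1,
      t1_t2 hdd, Jc, E.l00_eq, T.l3_eq, map_add, LinearMap.add_apply, T.jac_d1_fst, T.act₂_br₀,
      Prod.mk_add_mk]
    congr 2 <;> abel
  nat2 x y z f a := by
    simp only [E.br2_object_left, E.br2_object_right, map_zero, map_neg, comp02, one1,
      t1_t2 hdd, Jc, E.l00_eq, T.l3_eq, map_add, LinearMap.add_apply, T.jac_d1_snd, T.act₂_br₀,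
      Prod.mk_add_mk]
    congr 2 <;> abel

end Ell3

namespace Jacobiator

variable (S : Jacobiator E)

/-- The trilinear map `ℓ₃` extracted from a Jacobiator, as its `V₁`-component. -/
def toEll3 : Ell3 E where
  l3 x y z := (S.J x y z).2
  tri :=
    ⟨fun x y => (LinearMap.snd K V0 V1 ∘ₗ (S.tri.1 x y).mk').isLinear,
      fun x z => (LinearMap.snd K V0 V1 ∘ₗ (S.tri.2.1 x z).mk').isLinear,
      fun y z => (LinearMap.snd K V0 V1 ∘ₗ (S.tri.2.2 y z).mk').isLinear⟩
  anti12 := S.anti12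
  anti23 := S.anti23
  cond1 x y z := by
    have h := S.tgt x y z
    rw [t1, S.src] at h
    rw [add_comm (d1 _), h, E.anti00 (E.l00 y z)]
    abel
  cond2 x y f := by
    have h := congrArg (fun v => v.2.1) (S.nat1 0 x y f 0)
    have h0 : S.J 0 x y = 0 := (S.tri.2.2 x y).map_zero
    simp only [E.br2_object_left, E.br2_object_right, map_neg, map_zero, comp02, one1, t1, t2, h0,
      add_zero, zero_add, neg_neg, Prod.snd_add, Prod.fst_add, Prod.snd_zero] at h
    rw [← eq_sub_iff_add_eq'] at h
    rw [h]
    simp only [E.l00_eq, E.l01_eq, E.l10_eq]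
    abel
  cond3 x y a := by
    have h := congrArg (fun v => v.2.2) (S.nat1 0 x y 0 a)
    simp only [E.br2_object_left, E.br2_object_right, map_neg, map_zero, comp02, one1,
      add_zero, zero_add, neg_neg, Prod.snd_add] at h
    simp only [E.l00_eq, E.l02_eq, E.l20_eq, h]
    abel

theorem Jc_toEll3 : Jc E S.toEll3 = S.J :=
  funext₃ fun x y z => Prod.ext (S.src x y z).symm rfl

end Jacobiator

/-- The correspondence between maps `ℓ₃` and Jacobiators. -/
def Ell3.equivJacobiator (hdd : ∀ a, d1 (d2 a) = 0) : Ell3 E ≃ Jacobiator E where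
  toFun T := T.toJacobiator hdd
  invFun S := S.toEll3
  left_inv _ := rfl
  right_inv S := by
    simp only [toJacobiator, S.Jc_toEll3]

end Jacobiator

section Identiator

variable {E : Ell2 K V0 V1 V2 d1 d2}

section EtaEps

variable (T : Ell3 E)

theorem Ell3.act₁_d1_jac (f : V1) (x y z : V0) :
    E.act₁ (d1 f) (T.jac x y z) =
      E.act₁ (E.br₀ (E.br₀ x y) z) f - E.act₁ (E.br₀ (E.br₀ x z) y) f -
        E.act₁ (E.br₀ x (E.br₀ y z)) f := by
  rw [E.act₁_d1_antisymm, T.d1_jac]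
  simp only [map_add, map_sub, LinearMap.add_apply, LinearMap.sub_apply]
  abel

theorem eta_fst (x y z u : V0) :
    (eta E T x y z u).1 = E.br₀ (E.br₀ (E.br₀ x y) z) u := rfl

theorem eta_snd (x y z u : V0) :
    (eta E T x y z u).2 = -E.act₁ u (T.jac x y z) + (T.jac (E.br₀ x z) y u +
      T.jac x (E.br₀ y z) u) - E.act₁ y (T.jac x z u) + E.act₁ x (T.jac y z u) := by
  simp [eta, comp01, E.br1_eq, Jc, one0, E.l00_eq, T.l3_eq, ← sub_eq_add_neg]

theorem eps_snd (x y z u : V0) :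
    (eps E T x y z u).2 = T.jac (E.br₀ x y) z u - E.act₁ z (T.jac x y u) +
      (T.jac x (E.br₀ y u) z + T.jac (E.br₀ x u) y z + T.jac x y (E.br₀ z u)) := by
  simp [eps, comp01, E.br1_eq, Jc, one0, E.l00_eq, T.l3_eq, ← sub_eq_add_neg]

theorem eta_isLinearMap :
    (∀ x y z, IsLinearMap K (eta E T x y z)) ∧
    (∀ x y u, IsLinearMap K (fun z => eta E T x y z u)) ∧
    (∀ x z u, IsLinearMap K (fun y => eta E T x y z u)) ∧
    (∀ y z u, IsLinearMap K (fun x => eta E T x y z u)) := by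
  refine ⟨fun x y z => ⟨fun _ _ => Prod.ext ?_ ?_, fun _ _ => Prod.ext ?_ ?_⟩,
    fun x y u => ⟨fun _ _ => Prod.ext ?_ ?_, fun _ _ => Prod.ext ?_ ?_⟩,
    fun x z u => ⟨fun _ _ => Prod.ext ?_ ?_, fun _ _ => Prod.ext ?_ ?_⟩,
    fun y z u => ⟨fun _ _ => Prod.ext ?_ ?_, fun _ _ => Prod.ext ?_ ?_⟩⟩
  all_goals
    simp only [eta_fst, eta_snd, Prod.fst_add, Prod.snd_add, Prod.smul_fst, Prod.smul_snd,
      map_add, map_smul, LinearMap.add_apply, LinearMap.smul_apply]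
  all_goals module

-- `η` is a natural 2-transformation `F ⇒ G`, being a composite of such transformations.
theorem eta_natural₁ (x y z u : V0) (f : V1) (a : V2) :
    comp02 (Fq E (x, f, a) (y, 0, 0) (z, 0, 0) (u, 0, 0)) (one1 (eta E T (x + d1 f) y z u)) =
      comp02 (one1 (eta E T x y z u)) (Gq E (x, f, a) (y, 0, 0) (z, 0, 0) (u, 0, 0)) := by
  simp only [Fq, Gq, E.br2_object_object, E.br2_object_right, map_neg]
  simp only [comp02, one1, eta_snd, map_add, map_sub, map_neg, Prod.mk_add_mk,
    LinearMap.add_apply, LinearMap.neg_apply, E.br₀_d1_left, T.jac_d1_fst, T.act₁_d1_jac,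
    T.act₂_br₀]
  congr 2 <;> abel

theorem eta_natural₂ (x y z u : V0) (f : V1) (a : V2) :
    comp02 (Fq E (x, 0, 0) (y, f, a) (z, 0, 0) (u, 0, 0)) (one1 (eta E T x (y + d1 f) z u)) =
      comp02 (one1 (eta E T x y z u)) (Gq E (x, 0, 0) (y, f, a) (z, 0, 0) (u, 0, 0)) := by
  simp only [Fq, Gq, E.br2_object_object, E.br2_object_left, E.br2_object_right, map_neg]
  simp only [comp02, one1, eta_snd, map_add, map_sub, map_neg, Prod.mk_add_mk,
    LinearMap.add_apply, LinearMap.neg_apply, E.br₀_d1_left, T.jac_d1_fst, T.jac_d1_snd,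
    T.act₁_d1_jac, T.act₂_br₀]
  congr 2 <;> abel

theorem eta_natural₃ (x y z u : V0) (f : V1) (a : V2) :
    comp02 (Fq E (x, 0, 0) (y, 0, 0) (z, f, a) (u, 0, 0)) (one1 (eta E T x y (z + d1 f) u)) =
      comp02 (one1 (eta E T x y z u)) (Gq E (x, 0, 0) (y, 0, 0) (z, f, a) (u, 0, 0)) := by
  simp only [Fq, Gq, E.br2_object_object, E.br2_object_left, E.br2_object_right, map_neg]
  simp only [comp02, one1, eta_snd, map_add, map_sub, Prod.mk_add_mk, LinearMap.add_apply,
    ← E.d1_act₁, T.jac_d1_fst, T.jac_d1_snd, T.jac_d1_trd, T.act₂_br₀]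
  congr 2 <;> abel

theorem eta_natural₄ (x y z u : V0) (f : V1) (a : V2) :
    comp02 (Fq E (x, 0, 0) (y, 0, 0) (z, 0, 0) (u, f, a)) (one1 (eta E T x y z (u + d1 f))) =
      comp02 (one1 (eta E T x y z u)) (Gq E (x, 0, 0) (y, 0, 0) (z, 0, 0) (u, f, a)) := by
  simp only [Fq, Gq, E.br2_object_object, E.br2_object_left, E.br2_object_right, map_neg]
  simp only [comp02, one1, eta_snd, map_add, map_sub, Prod.mk_add_mk, LinearMap.add_apply,
    T.jac_d1_trd, T.act₁_d1_jac, T.act₂_br₀]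
  congr 2 <;> abel

end EtaEps

namespace Ell4

variable {T : Ell3 E} (Q : Ell4 E T)

theorem d2_l4 (x y z u : V0) :
    d2 (Q.l4 x y z u) = (eta E T x y z u).2 - (eps E T x y z u).2 :=
  eq_sub_of_add_eq (sub_eq_zero.mp ((sub_add_eq_add_sub _ _ _).symm.trans (Q.cond1 x y z u)))

theorem l4_add_d1₁ (f : V1) (x y z u : V0) : Q.l4 (x + d1 f) y z u = Q.l4 x y z u := by
  rw [(Q.quad.2.2.2 y z u).map_add, Q.cond2, add_zero]

theorem l4_add_d1₂ (f : V1) (x y z u : V0) : Q.l4 x (y + d1 f) z u = Q.l4 x y z u := by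
  rw [Q.anti12, Q.l4_add_d1₁, ← Q.anti12]

theorem l4_add_d1₃ (f : V1) (x y z u : V0) : Q.l4 x y (z + d1 f) u = Q.l4 x y z u := by
  rw [Q.anti23, Q.l4_add_d1₂, ← Q.anti23]

theorem l4_add_d1₄ (f : V1) (x y z u : V0) : Q.l4 x y z (u + d1 f) = Q.l4 x y z u := by
  rw [Q.anti34, Q.l4_add_d1₃, ← Q.anti34]

theorem comp02_muc {x y z u x' y' z' u' : V0} {v w : V0 × V1 × V2}
    (hl : Q.l4 x' y' z' u' = Q.l4 x y z u)
    (h : comp02 v (one1 (eta E T x' y' z' u')) = comp02 (one1 (eta E T x y z u)) w) :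
    comp02 v (muc E T Q x' y' z' u') = comp02 (muc E T Q x y z u) w := by
  simp only [comp02, one1, muc, Prod.mk.injEq, add_zero, zero_add, hl] at h ⊢
  exact ⟨h.1, h.2.1, by rw [h.2.2, add_comm]⟩

theorem t2_muc (x y z u : V0) : t2 d2 (muc E T Q x y z u) = eps E T x y z u := by
  refine Prod.ext rfl ?_
  simp only [t2, muc, map_neg, Q.d2_l4, neg_sub, add_sub_cancel]

theorem muc_isLinearMap :
    (∀ x y z, IsLinearMap K (muc E T Q x y z)) ∧
    (∀ x y u, IsLinearMap K (fun z => muc E T Q x y z u)) ∧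
    (∀ x z u, IsLinearMap K (fun y => muc E T Q x y z u)) ∧
    (∀ y z u, IsLinearMap K (fun x => muc E T Q x y z u)) := by
  have pair {e : V0 → V0 × V1} {l : V0 → V2} (he : IsLinearMap K e) (hl : IsLinearMap K l) :
      IsLinearMap K (fun x => ((e x).1, (e x).2, -l x)) :=
    ⟨fun _ _ => by simp only [he.map_add, hl.map_add, neg_add, Prod.fst_add, Prod.snd_add,
        Prod.mk_add_mk],
      fun _ _ => by simp only [he.map_smul, hl.map_smul, smul_neg, Prod.smul_fst, Prod.smul_snd,
        Prod.smul_mk]⟩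
  have hη := eta_isLinearMap T
  exact ⟨fun x y z => pair (hη.1 x y z) (Q.quad.1 x y z),
    fun x y u => pair (hη.2.1 x y u) (Q.quad.2.1 x y u),
    fun x z u => pair (hη.2.2.1 x z u) (Q.quad.2.2.1 x z u),
    fun y z u => pair (hη.2.2.2 y z u) (Q.quad.2.2.2 y z u)⟩

/-- The Identiator `μ_{xyzu} = ([[[x,y],z],u], h_{xyzu}, −ℓ₄(x,y,z,u))`. -/
def toIdentiator (hdd : ∀ a, d1 (d2 a) = 0) : Identiator E T where
  mu := muc E T Q
  quad := Q.muc_isLinearMap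
  src _ _ _ _ := rfl
  tgt := Q.t2_muc
  anti12 x y z u := congrArg Neg.neg (Q.anti12 x y z u)
  anti23 x y z u := congrArg Neg.neg (Q.anti23 x y z u)
  anti34 x y z u := congrArg Neg.neg (Q.anti34 x y z u)
  mod1 x y z u f a := by
    rw [t1_t2 hdd]
    exact Q.comp02_muc (Q.l4_add_d1₁ f x y z u) (eta_natural₁ T x y z u f a)
  mod2 x y z u f a := by
    rw [t1_t2 hdd]
    exact Q.comp02_muc (Q.l4_add_d1₂ f x y z u) (eta_natural₂ T x y z u f a)
  mod3 x y z u f a := by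
    rw [t1_t2 hdd]
    exact Q.comp02_muc (Q.l4_add_d1₃ f x y z u) (eta_natural₃ T x y z u f a)
  mod4 x y z u f a := by
    rw [t1_t2 hdd]
    exact Q.comp02_muc (Q.l4_add_d1₄ f x y z u) (eta_natural₄ T x y z u f a)

end Ell4

namespace Identiator

variable {T : Ell3 E} (S : Identiator E T)

/-- The quadrilinear map `ℓ₄` extracted from an Identiator, as minus its `V₂`-component. -/
def toEll4 : Ell4 E T where
  l4 x y z u := -(S.mu x y z u).2.2
  quad := by
    have neg_top {m : V0 → V0 × V1 × V2} (hm : IsLinearMap K m) :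
        IsLinearMap K (fun x => -(m x).2.2) :=
      (-(LinearMap.snd K V1 V2 ∘ₗ LinearMap.snd K V0 (V1 × V2) ∘ₗ hm.mk')).isLinear
    exact ⟨fun x y z => neg_top (S.quad.1 x y z), fun x y u => neg_top (S.quad.2.1 x y u),
      fun x z u => neg_top (S.quad.2.2.1 x z u), fun y z u => neg_top (S.quad.2.2.2 y z u)⟩
  anti12 x y z u := congrArg Neg.neg (S.anti12 x y z u)
  anti23 x y z u := congrArg Neg.neg (S.anti23 x y z u)
  anti34 x y z u := congrArg Neg.neg (S.anti34 x y z u)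
  cond1 x y z u := by
    rw [← S.tgt x y z u, ← S.src x y z u]
    simp only [s2, t2, map_neg]
    abel
  cond2 f x y z := by
    have h := congrArg (fun v => v.2.2) (S.mod1 0 x y z f 0)
    have h0 : S.mu 0 x y z = 0 := (S.quad.2.2.2 x y z).map_zero
    simpa [comp02, E.br2_eq, Fq, Gq, t1, t2, h0] using h

theorem muc_toEll4 : muc E T S.toEll4 = S.mu := by
  funext x y z u
  simp only [muc, ← S.src, toEll4, neg_neg]
  rfl

end Identiator

/-- The correspondence between maps `ℓ₄` and Identiators. -/
def Ell4.equivIdentiator (T : Ell3 E) (hdd : ∀ a, d1 (d2 a) = 0) : Ell4 E T ≃ Identiator E T where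
  toFun Q := Q.toIdentiator hdd
  invFun S := S.toEll4
  left_inv Q := by
    have h : (fun x y z u => - -Q.l4 x y z u) = Q.l4 := by simp only [neg_neg]
    cases Q
    simp only [toIdentiator, Identiator.toEll4, muc] at h ⊢
    congr
  right_inv S := by
    simp only [toIdentiator, S.muc_toEll4]

end Identiator

section Coherence

variable {E : Ell2 K V0 V1 V2 d1 d2} {T : Ell3 E}

namespace Ell4

variable (Q : Ell4 E T) (x y z u v : V0)

theorem t2_alpha4_snd :
    (t2 d2 (alpha4 E T Q x y z u v)).2 =
      -E.act₁ v ((eps E T x y z u).2 + T.jac (E.br₀ x u) z y + T.jac x z (E.br₀ y u) +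
          T.jac x (E.br₀ z u) y) +
        ((eps E T (E.br₀ x u) y z v).2 + (eps E T x (E.br₀ y u) z v).2 +
          (eps E T x y (E.br₀ z u) v).2) +
        (E.act₁ y (E.act₁ z (T.jac x u v)) - E.act₁ (E.br₀ y z) (T.jac x u v) -
          E.act₁ x (E.act₁ z (T.jac y u v)) + E.act₁ (E.br₀ x z) (T.jac y u v) +
          E.act₁ x (E.act₁ y (T.jac z u v)) - E.act₁ y (E.act₁ x (T.jac z u v))) := by
  simp only [t2, alpha4, comp02, muc, one1, one0, E.br2_eq, map_zero, add_zero, zero_sub, map_neg,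
    sub_neg_eq_add, zero_add, pad2, Jc, E.l00_eq, T.l3_eq, E.br1_eq, Prod.mk_add_mk,
    add_sub_cancel, map_add, sub_zero, E.d2_act₂, Q.d2_l4, map_sub, neg_sub, neg_add_rev]
  abel

theorem alpha3_snd_fst :
    (alpha3 E T Q x y z u v).2.1 =
      (eta E T (E.br₀ x y) z u v).2 - E.act₁ z (T.jac (E.br₀ x y) v u + (eta E T x y u v).2) -
        (E.act₁ (E.br₀ z u) (T.jac x y v) + E.act₁ (E.br₀ z v) (T.jac x y u)) +
        (T.jac x y (E.br₀ (E.br₀ z v) u) + T.jac x y (E.br₀ z (E.br₀ u v)) +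
          T.jac (E.br₀ (E.br₀ x v) u) y z + T.jac (E.br₀ x (E.br₀ u v)) y z +
          T.jac x (E.br₀ (E.br₀ y v) u) z + T.jac x (E.br₀ y (E.br₀ u v)) z) +
        (T.jac (E.br₀ x v) (E.br₀ y u) z + T.jac (E.br₀ x u) (E.br₀ y v) z +
          T.jac x (E.br₀ y v) (E.br₀ z u) + T.jac (E.br₀ x v) y (E.br₀ z u) +
          T.jac x (E.br₀ y u) (E.br₀ z v) + T.jac (E.br₀ x u) y (E.br₀ z v)) := by
  simp only [alpha3, comp02, muc, E.l00_eq, pad2, one1, Jc, T.l3_eq, one0, E.br1_eq, map_zero,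
    add_zero, zero_sub, Prod.mk_add_mk, add_sub_cancel, E.br2_eq, map_neg, sub_neg_eq_add,
    zero_add, map_add]
  abel

theorem t2_alpha2_snd :
    (t2 d2 (alpha2 E T Q x y z u v)).2 =
      E.act₁ v (E.act₁ u (T.jac x y z)) +
        ((eps E T (E.br₀ x z) y u v).2 + (eps E T x (E.br₀ y z) u v).2) +
        E.act₁ x (T.jac (E.br₀ y z) v u + (eps E T y z u v).2) -
        E.act₁ y (T.jac (E.br₀ x z) v u + (eps E T x z u v).2) +
        (E.act₁ (E.br₀ x v) (T.jac y z u) + E.act₁ (E.br₀ x u) (T.jac y z v) -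
          E.act₁ (E.br₀ y u) (T.jac x z v) - E.act₁ (E.br₀ y v) (T.jac x z u)) := by
  simp only [t2, alpha2, comp02, one1, Jc, E.l00_eq, T.l3_eq, one0, E.br1_eq, map_zero, add_zero,
    zero_sub, map_neg, sub_neg_eq_add, zero_add, muc, Prod.mk_add_mk, pad2, map_add,
    sub_zero, add_sub_cancel, E.br2_eq, Q.d2_l4, neg_sub, E.d2_act₂, map_sub]
  abel

theorem alpha1_snd_fst :
    (alpha1 E T Q x y z u v).2.1 =
      T.jac (E.br₀ (E.br₀ x y) z) u v + (eta E T x y z (E.br₀ u v)).2 -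
        E.act₁ u ((eta E T x y z v).2 + T.jac x (E.br₀ z v) y + T.jac (E.br₀ x v) z y +
          T.jac x z (E.br₀ y v)) +
        ((eta E T (E.br₀ x v) y z u).2 + (eta E T x (E.br₀ y v) z u).2 +
          (eta E T x y (E.br₀ z v) u).2) := by
  simp only [alpha1, comp02, one1, Jc, E.l00_eq, T.l3_eq, muc, one0, E.br2_eq, map_zero, add_zero,
    zero_sub, map_neg, sub_neg_eq_add, zero_add, Prod.mk_add_mk, pad2, E.br1_eq, add_sub_cancel,
    map_add]
  abel

theorem comp12_alpha4_alpha3 : Comp12 d2 (alpha4 E T Q x y z u v) (alpha3 E T Q x y z u v) := by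
  refine Prod.ext rfl ?_
  have hx := T.jac_d1_fst (T.jac x y u) z v
  have hx' := T.jac_d1_fst (T.jac x u v) y z
  have hy := T.jac_d1_snd x (T.jac y u v) z
  have hz := T.jac_d1_trd x y (T.jac z u v)
  simp only [T.d1_jac, map_add, map_sub, LinearMap.add_apply, LinearMap.sub_apply] at hx hx' hy hz
  simp only [t2_alpha4_snd, s2, alpha3_snd_fst, eta_snd, eps_snd, map_add, map_sub, map_neg,
    T.jac_antisymm₂₃ (E.br₀ x u) z y, T.jac_antisymm₂₃ x z (E.br₀ y u),
    T.jac_antisymm₂₃ x (E.br₀ z u) y, T.jac_antisymm₂₃ (E.br₀ x y) v u]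
  linear_combination (norm := abel) hx - hx' - hy - hz

theorem comp12_alpha2_alpha1 : Comp12 d2 (alpha2 E T Q x y z u v) (alpha1 E T Q x y z u v) := by
  refine Prod.ext rfl ?_
  have hx := T.jac_d1_fst (T.jac x y z) u v
  have hx' := T.jac_d1_fst (T.jac x z v) y u
  have hy := T.jac_d1_snd x (T.jac y z v) u
  simp only [T.d1_jac, map_add, map_sub, LinearMap.add_apply, LinearMap.sub_apply] at hx hx' hy
  simp only [t2_alpha2_snd, s2, alpha1_snd_fst, eta_snd, eps_snd, map_add, map_sub, map_neg,
    T.jac_antisymm₂₃ (E.br₀ y z) v u, T.jac_antisymm₂₃ (E.br₀ x z) v u,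
    T.jac_antisymm₂₃ x (E.br₀ z v) y, T.jac_antisymm₂₃ (E.br₀ x v) z y,
    T.jac_antisymm₂₃ x z (E.br₀ y v)]
  linear_combination (norm := abel) hx - hx' - hy

/-- The left-hand side of the `L∞` condition `n = 5`. -/
def linftyFive : V2 :=
  E.l20 (Q.l4 x y z u) v - E.l20 (Q.l4 x y z v) u + E.l20 (Q.l4 x y u v) z -
    E.l20 (Q.l4 x z u v) y + E.l20 (Q.l4 y z u v) x +
    Q.l4 (E.l00 x y) z u v - Q.l4 (E.l00 x z) y u v + Q.l4 (E.l00 x u) y z v -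
    Q.l4 (E.l00 x v) y z u + Q.l4 (E.l00 y z) x u v - Q.l4 (E.l00 y u) x z v +
    Q.l4 (E.l00 y v) x z u + Q.l4 (E.l00 z u) x y v - Q.l4 (E.l00 z v) x y u +
    Q.l4 (E.l00 u v) x y z

theorem linftyFive_eq :
    Q.linftyFive x y z u v =
      (alpha2 E T Q x y z u v).2.2 + (alpha1 E T Q x y z u v).2.2 -
        ((alpha4 E T Q x y z u v).2.2 + (alpha3 E T Q x y z u v).2.2) := by
  have snd (a b c p q : V0) : Q.l4 a (E.l00 p q) b c = -Q.l4 (E.l00 p q) a b c := Q.anti12 _ _ _ _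
  have trd (a b c p q : V0) : Q.l4 a b (E.l00 p q) c = Q.l4 (E.l00 p q) a b c := by
    rw [Q.anti23, snd, neg_neg]
  have fth (a b c p q : V0) : Q.l4 a b c (E.l00 p q) = -Q.l4 (E.l00 p q) a b c := by
    rw [Q.anti34, trd]
  simp only [linftyFive, E.l20_eq, sub_neg_eq_add, alpha2, comp02, one1, one0, muc, snd, neg_neg,
    Prod.mk_add_mk, zero_add, pad2, Prod.fst_add, Prod.snd_add, add_sub_cancel, add_zero,
    E.br2_eq, map_add, map_zero, sub_zero, map_neg, zero_sub, alpha1, fth, trd, alpha4, alpha3]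
  abel

theorem coherence_iff :
    alpha1 E T Q x y z u v + inv2 d2 (alpha4 E T Q x y z u v) =
        alpha3 E T Q x y z u v + inv2 d2 (alpha2 E T Q x y z u v) ↔
      Q.linftyFive x y z u v = 0 := by
  rw [add_inv2_eq_add_inv2_iff (Q.comp12_alpha4_alpha3 x y z u v)
    (Q.comp12_alpha2_alpha1 x y z u v), linftyFive_eq, sub_eq_zero]

end Ell4

end Coherence

section Correspondence

theorem Ell3.eta_snd_sub_eps_snd {E : Ell2 K V0 V1 V2 d1 d2} (T : Ell3 E) (x y z u : V0) :
    (eta E T x y z u).2 - (eps E T x y z u).2 =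
      E.l10 (T.l3 x y z) u - E.l10 (T.l3 x y u) z + E.l10 (T.l3 x z u) y - E.l10 (T.l3 y z u) x -
        T.l3 (E.l00 x y) z u + T.l3 (E.l00 x z) y u - T.l3 (E.l00 x u) y z -
        T.l3 (E.l00 y z) x u + T.l3 (E.l00 y u) x z - T.l3 (E.l00 z u) x y := by
  rw [eta_snd, eps_snd, T.jac_antisymm₁₂ x (E.br₀ y z) u, T.jac_antisymm₁₂ x (E.br₀ y u) z,
    T.jac_rotate x y (E.br₀ z u)]
  simp only [E.l10_eq, E.l00_eq, T.l3_eq]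
  abel

namespace LInfty3

variable (A : LInfty3 K V0 V1 V2 d1 d2)

/-- The quadrilinear map `ℓ₄`, with the `L∞` condition `n = 4` on `V₀⁴` rewritten as
`d ℓ₄ = h − e`, where `h` and `e` are the `V₁`-components of `η` and `ε`. -/
def toEll4 : Ell4 A.E2 A.T3 where
  l4 := A.l4
  quad := A.quad
  anti12 := A.anti12
  anti23 := A.anti23
  anti34 := A.anti34
  cond1 x y z u := by
    rw [sub_add, A.T3.eta_snd_sub_eps_snd, ← A.cond4a x y z u]
    abel
  cond2 := A.cond4b

/-- The 3-term Lie infinity algebra with quadrilinear map `ℓ₄`, given the condition `n = 5`. -/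
def ofEll4 {E : Ell2 K V0 V1 V2 d1 d2} {T : Ell3 E} (Q : Ell4 E T)
    (hQ : ∀ x y z u v, Q.linftyFive x y z u v = 0) : LInfty3 K V0 V1 V2 d1 d2 where
  E2 := E
  T3 := T
  l4 := Q.l4
  quad := Q.quad
  anti12 := Q.anti12
  anti23 := Q.anti23
  anti34 := Q.anti34
  cond4a x y z u := by
    rw [Q.d2_l4, T.eta_snd_sub_eps_snd]
    abel
  cond4b := Q.cond2
  cond5 := hQ

/-- The Lie 3-algebra associated with a 3-term Lie infinity algebra. -/
def toLie3 (hdd : ∀ a, d1 (d2 a) = 0) : Lie3 K V0 V1 V2 d1 d2 :=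
  let jacobiator := Ell3.equivJacobiator hdd A.T3
  let identiator := Ell4.equivIdentiator A.T3 hdd A.toEll4
  { Br := Ell2.equivBracket hdd A.E2
    J := jacobiator.J
    Jtri := jacobiator.tri
    Jsrc := jacobiator.src
    Jtgt := jacobiator.tgt
    Janti12 := jacobiator.anti12
    Janti23 := jacobiator.anti23
    Jnat3 := jacobiator.nat3
    Jnat1 := jacobiator.nat1
    Jnat2 := jacobiator.nat2
    mu := identiator.mu
    muquad := identiator.quad
    musrc := identiator.src
    mutgt := identiator.tgt
    muanti12 := identiator.anti12
    muanti23 := identiator.anti23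
    muanti34 := identiator.anti34
    mumod4 := identiator.mod4
    mumod3 := identiator.mod3
    mumod2 := identiator.mod2
    mumod1 := identiator.mod1
    coherence x y z u v := (A.toEll4.coherence_iff x y z u v).2 (A.cond5 x y z u v) }

variable (hdd : ∀ a, d1 (d2 a) = 0)

theorem toLie3_injective :
    Function.Injective (toLie3 · hdd : LInfty3 K V0 V1 V2 d1 d2 → Lie3 K V0 V1 V2 d1 d2) := by
  rintro ⟨E, ⟨l3, _⟩, l4, _⟩ ⟨E', ⟨l3', _⟩, l4', _⟩ h
  obtain rfl : E = E' := (Ell2.equivBracket hdd).injective (congrArg Lie3.Br h)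
  obtain rfl : l3 = l3' := funext₃ fun x y z =>
    congrArg (fun L : Lie3 K V0 V1 V2 d1 d2 => (L.J x y z).2) h
  obtain rfl : l4 = l4' := by
    funext x y z u
    exact neg_injective (congrArg (fun L : Lie3 K V0 V1 V2 d1 d2 => (L.mu x y z u).2.2) h)
  rfl

theorem toLie3_surjective :
    Function.Surjective (toLie3 · hdd : LInfty3 K V0 V1 V2 d1 d2 → Lie3 K V0 V1 V2 d1 d2) := by
  rintro ⟨Br, J, Jtri, Jsrc, Jtgt, Janti12, Janti23, Jnat3, Jnat1, Jnat2, mu, muquad, musrc, mutgt,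
    muanti12, muanti23, muanti34, mumod4, mumod3, mumod2, mumod1, coherence⟩
  obtain ⟨E, rfl⟩ := (Ell2.equivBracket hdd).surjective Br
  obtain ⟨T, hT⟩ := (Ell3.equivJacobiator hdd).surjective
    ⟨J, Jtri, Jsrc, Jtgt, Janti12, Janti23, Jnat3, Jnat1, Jnat2⟩
  obtain rfl : Jc E T = J := congrArg Jacobiator.J hT
  obtain ⟨Q, hQ⟩ := (Ell4.equivIdentiator T hdd).surjective
    ⟨mu, muquad, musrc, mutgt, muanti12, muanti23, muanti34, mumod4, mumod3, mumod2, mumod1⟩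
  obtain rfl : muc E T Q = mu := congrArg Identiator.mu hQ
  exact ⟨ofEll4 Q fun x y z u v => (Q.coherence_iff x y z u v).1 (coherence x y z u v), rfl⟩

/-- The one-to-one correspondence between 3-term Lie infinity algebras and Lie 3-algebras. -/
noncomputable def equivLie3 : LInfty3 K V0 V1 V2 d1 d2 ≃ Lie3 K V0 V1 V2 d1 d2 :=
  Equiv.ofBijective (toLie3 · hdd) ⟨toLie3_injective hdd, toLie3_surjective hdd⟩

end LInfty3

end Correspondence

end GV

open GV

/-- There is a one-to-one correspondence between Lie 3-algebras
`(G(V), [−,−], J, μ)` and 3-term Lie infinity algebras `(V, ℓ₁, ℓ₂, ℓ₃, ℓ₄)` whose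
`ℓ₂` vanishes on `V₁ × V₁` and whose `ℓ₃` vanishes on triples of total degree 1.
Under the correspondence `ℓ₁ = d`, the bracket is
`[(x,f,a),(y,g,b)] = (ℓ₂(x,y), ℓ₂(x,g) + ℓ₂(f, y + d g), ℓ₂(x,b) + ℓ₂(a,y))`,
the Jacobiator is `J_{xyz} = ([[x,y],z], ℓ₃(x,y,z))`, and the Identiator is
`μ_{xyzu} = ([[[x,y],z],u], h_{xyzu}, −ℓ₄(x,y,z,u))`. -/
theorem lie3_linfty3_correspondence (K : Type) [Field K]
    (V0 V1 V2 : Type) [AddCommGroup V0] [AddCommGroup V1] [AddCommGroup V2]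
    [Module K V0] [Module K V1] [Module K V2]
    (d1 : V1 →ₗ[K] V0) (d2 : V2 →ₗ[K] V1) (hdd : ∀ a, d1 (d2 a) = 0) :
    ∃ Φ : LInfty3 K V0 V1 V2 d1 d2 ≃ Lie3 K V0 V1 V2 d1 d2,
      ∀ A : LInfty3 K V0 V1 V2 d1 d2,
        ((∀ x y, (Φ A).Br.B0 x y = A.E2.l00 x y) ∧
         (∀ x f y g, (Φ A).Br.B1 (x, f) (y, g) =
            (A.E2.l00 x y, A.E2.l01 x g + A.E2.l10 f (y + d1 g))) ∧
         (∀ x f a y g b, (Φ A).Br.B2 (x, f, a) (y, g, b) =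
            (A.E2.l00 x y, A.E2.l01 x g + A.E2.l10 f (y + d1 g),
              A.E2.l02 x b + A.E2.l20 a y))) ∧
        (∀ x y z, (Φ A).J x y z = (A.E2.l00 (A.E2.l00 x y) z, A.T3.l3 x y z)) ∧
        (∀ x y z u, (Φ A).mu x y z u =
          ((eta A.E2 A.T3 x y z u).1, (eta A.E2 A.T3 x y z u).2, -A.l4 x y z u)) :=
  ⟨LInfty3.equivLie3 hdd, fun _ => ⟨⟨fun _ _ => rfl, fun _ _ _ _ => rfl, fun _ _ _ _ _ _ => rfl⟩,
    fun _ _ _ => rfl, fun _ _ _ _ => rfl⟩⟩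
end
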